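/- arXiv:math/0603166 — 3 statements merged into one kernel-verified Lean document; each statement's English description precedes it below -/
import Mathlib

section
/- (Multinets lie in pencils.) Let (L₁,…,L_k; m; X) be a multinet on a line arrangement L in the complex projective plane, with the multiplicities m(ℓ) having greatest common divisor 1. Represent each line ℓ ∈ L as ℓ = ker α_ℓ for a nonzero linear form α_ℓ on ℂ³, the forms α_ℓ being pairwise non-proportional. For each i let C_i = ∏_{ℓ ∈ L_i} α_ℓ^{m(ℓ)}, a homogeneous polynomial of degree d in ℂ[x,y,z]. Then C₁ and C₂ are linearly independent over ℂ, and for every i there exist scalars a_i, b_i ∈ ℂ with C_i = a_i·C₁ + b_i·C₂; that is, the ℂ-span of {C₁,…,C_k} is exactly 2-dimensional. -/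
/-!
The key object is the graded ring `⊕ V_w`, where `V_w` (`sysOf`) consists of the forms of degree
`w` with multiplicity at least `w * n_p / d` at every base point `p ∈ X`. All the `C_i` lie in
`V_d`, so it suffices to prove `dim V_d ≤ 2` and that `C_1`, `C_2` are independent. The latter
follows by evaluating at a point `q_i` of the class `L_i` outside `X`, where `C_i` vanishes and
the other `C_j` do not.

Let `v_i` be the gcd of the multiplicities in `L_i` and write `C_i = F_i ^ v_i` with
`deg F_i = f_i = d / v_i`. A line `ℓ ∈ L_i` meets the curve of another class only in `X`, so the
weights `n_p` of the base points on `ℓ` sum to at least `d` (`le_sum_base`), and a member of `V_w`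
already has `w` zeros on `ℓ` inside `X`. If it has one more zero on `ℓ`, it contains `ℓ`
(`vanish_on_line`). The member then also vanishes at the points where `ℓ` meets the other lines of
`L_i` outside `X`, so the connectedness of `L_i` spreads the divisibility; comparing the orders
along the lines of `L_i` upgrades it to divisibility by `F_i` (`class_dvd`). Evaluation at `q_i`
hence gives exact sequences `0 → V_{w - f_i} → V_w → ℂ` (`finrank_step`), i.e. the Hilbert function
`H w = dim V_w` satisfies `H (w + f_i) = H w + [w + f_i ∈ S_i]`, where the additive monoid
`S_i = {w | some member of V_w is nonzero at q_i}` contains `d`.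

The rest is arithmetic (`hilbert_le`). For a large multiple `w` of `d`, the difference
`H (w + d) - H w` is the number of multiples of `f_i` up to `d` that are divisible by the gcd of
`S_i`. It divides `v_i` for every `i`, so it equals `1` because the `v_i` have gcd `1`. Since
`H d - H 0` counts those multiples that lie in `S_i`, it is at most `1`; and `H 0 ≤ 1`.
-/

open Finset
open scoped Classical

/-- The homogeneous degree-1 polynomial in ℂ[x,y,z] (= MvPolynomial (Fin 3) ℂ)
associated with a linear form φ on ℂ³. -/
noncomputable def linFormPoly (φ : (Fin 3 → ℂ) →ₗ[ℂ] ℂ) : MvPolynomial (Fin 3) ℂ :=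
  ∑ s : Fin 3, MvPolynomial.C (φ (Pi.single s 1)) * MvPolynomial.X s

/-! ### Counting with numerical semigroups -/

lemma count_step (H : ℕ → ℕ) (S : Set ℕ) (w : ℕ)
    (hH : ∀ n, H (n + w) = H n + if n + w ∈ S then 1 else 0) (n v : ℕ) :
    H (n + v * w) = H n + #{j ∈ range v | n + (j + 1) * w ∈ S} := by
  induction v with
  | zero => simp
  | succ v ih =>
    have e : n + (v + 1) * w = (n + v * w) + w := by ring
    rw [e, hH, ih, range_add_one, filter_insert, ← e]
    split_ifs with h
    · rw [card_insert_of_notMem (by simp)]; ring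
    · ring

/-- The multiples `w, 2 * w, …, v * w` divisible by `e` are counted by a divisor of `v`
whenever `e ∣ v * w`. -/
lemma count_dvd (e v w : ℕ) (hw : 0 < w) (hdvd : e ∣ v * w) :
    #{j ∈ range v | e ∣ (j + 1) * w} ∣ v := by
  have key : ∀ a, e ∣ a * w ↔ e / e.gcd w ∣ a := by
    intro a
    rw [← Nat.dvd_gcd_mul_iff_dvd_mul]
    have hg : 0 < e.gcd w := Nat.gcd_pos_of_pos_right _ hw
    obtain ⟨e', he'⟩ := Nat.gcd_dvd_left e w
    obtain ⟨w', hw'⟩ := Nat.gcd_dvd_right e w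
    have hdiv : e / e.gcd w = e' := Nat.div_eq_of_eq_mul_right hg he'
    have hcop : Nat.Coprime e' w' := by
      have := Nat.coprime_div_gcd_div_gcd hg
      rwa [hdiv, Nat.div_eq_of_eq_mul_right hg hw'] at this
    rw [hdiv, Nat.dvd_gcd_mul_iff_dvd_mul]
    generalize e.gcd w = g at *
    subst he' hw'
    rw [show a * (g * w') = g * (a * w') by ring, Nat.mul_dvd_mul_iff_left hg]
    exact hcop.dvd_mul_right
  simp_rw [key]
  rw [Nat.card_multiples]
  exact Nat.div_dvd_of_dvd ((key v).1 hdvd)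

/-- A Hilbert function `H` which, for every `i`, grows along steps of length `w i` exactly when a
numerical semigroup `S i ∋ d` is hit, satisfies `H d ≤ H 0 + 1` as soon as the numbers
`v i = d / w i` have no common factor. Far out, `H (n + d) - H n` counts the multiples of `w i`
up to `d` divisible by the gcd of `S i`; this is a divisor of every `v i`, hence is `1`, and it
bounds `H d - H 0`. -/
lemma hilbert_le {k d : ℕ} (hk : 0 < k) (H : ℕ → ℕ) (S : Fin k → AddSubmonoid ℕ)
    (w v : Fin k → ℕ) (hd : 0 < d) (hvw : ∀ i, v i * w i = d) (hdS : ∀ i, d ∈ S i)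
    (hH : ∀ i n, H (n + w i) = H n + if n + w i ∈ S i then 1 else 0)
    (hv : ∀ c, (∀ i, c ∣ v i) → c = 1) : H d ≤ H 0 + 1 := by
  have hw : ∀ i, 0 < w i := fun i => Nat.pos_of_ne_zero fun h => by
    have := hvw i; rw [h] at this; omega
  let e : Fin k → ℕ := fun i => Nat.setGcd (S i)
  have he : ∀ i, ∀ s ∈ S i, e i ∣ s := fun i s hs => Nat.setGcd_dvd_of_mem hs
  let c : Fin k → ℕ := fun i => #{j ∈ range (v i) | e i ∣ (j + 1) * w i}
  have hex : ∀ i, ∃ n, ∀ m ≥ n, e i ∣ m → m ∈ S i := fun i => by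
    obtain ⟨n, hn⟩ := Nat.exists_mem_closure_of_ge (S i : Set ℕ)
    exact ⟨n, fun m hm h => by simpa using hn m hm h⟩
  choose n0 hn0 using hex
  let n := d * ∑ i, n0 i
  have hlarge : ∀ i, H (n + d) = H n + c i := by
    intro i
    have hstep := count_step H (S i) (w i) (by simpa using hH i) n (v i)
    rw [hvw] at hstep
    rw [hstep]
    congr 2
    refine filter_congr fun j _ => ?_
    have hen : e i ∣ n := (he i d (hdS i)).mul_right _
    have hnn : n0 i ≤ n := by
      calc n0 i ≤ ∑ i, n0 i := single_le_sum (fun _ _ => Nat.zero_le _) (mem_univ i)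
        _ ≤ n := Nat.le_mul_of_pos_left _ hd
    constructor
    · intro h
      exact (Nat.dvd_add_right hen).1 (he i _ h)
    · intro h
      exact hn0 i _ (by omega) ((Nat.dvd_add_right hen).2 h)
  have i0 : Fin k := ⟨0, hk⟩
  have hc1 : c i0 = 1 := by
    apply hv
    intro i
    have : c i0 = c i := by have := hlarge i0; have := hlarge i; omega
    rw [this]
    exact count_dvd _ _ _ (hw i) (by rw [hvw]; exact he i d (hdS i))
  have hstep := count_step H (S i0) (w i0) (by simpa using hH i0) 0 (v i0)
  rw [hvw, zero_add] at hstep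
  rw [hstep]
  refine Nat.add_le_add_left (le_trans (card_le_card ?_) hc1.le) _
  refine monotone_filter_right _ fun j _ h => ?_
  exact he _ _ (by simpa using h)

/-! ### Linear forms as polynomials -/

lemma eval_linFormPoly (φ : (Fin 3 → ℂ) →ₗ[ℂ] ℂ) (y : Fin 3 → ℂ) :
    MvPolynomial.eval y (linFormPoly φ) = φ y := by
  conv_rhs => rw [← Finset.univ_sum_single y]
  simp only [linFormPoly, map_sum, map_mul, MvPolynomial.eval_C, MvPolynomial.eval_X]
  refine sum_congr rfl fun s _ => ?_
  rw [mul_comm, ← smul_eq_mul, ← map_smul, ← Pi.single_smul]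
  simp

lemma linFormPoly_homogeneous (φ : (Fin 3 → ℂ) →ₗ[ℂ] ℂ) : (linFormPoly φ).IsHomogeneous 1 :=
  MvPolynomial.IsHomogeneous.sum _ _ _ fun _ _ => MvPolynomial.isHomogeneous_C_mul_X _ _

/-- Divisibility by a nonzero linear form `φ` is detected by the substitution that projects `ℂ³`
onto `ker φ`, a ring endomorphism whose value at `y` is evaluation at the projected point. -/
lemma exists_projection (φ : (Fin 3 → ℂ) →ₗ[ℂ] ℂ) (hφ : φ ≠ 0) :
    ∃ σ : MvPolynomial (Fin 3) ℂ →ₐ[ℂ] MvPolynomial (Fin 3) ℂ,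
      (∀ G, linFormPoly φ ∣ G ↔ σ G = 0) ∧
      ∀ y, ∃ z, φ z = 0 ∧ ∀ G, MvPolynomial.eval y (σ G) = MvPolynomial.eval z G := by
  obtain ⟨u, hu⟩ : ∃ u, φ u = 1 := by
    obtain ⟨x, hx⟩ : ∃ x, φ x ≠ 0 := by
      by_contra! h
      exact hφ (LinearMap.ext h)
    exact ⟨(φ x)⁻¹ • x, by simp [hx]⟩
  let σ : MvPolynomial (Fin 3) ℂ →ₐ[ℂ] MvPolynomial (Fin 3) ℂ :=
    MvPolynomial.aeval fun s => MvPolynomial.X s - MvPolynomial.C (u s) * linFormPoly φ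
  have hev : ∀ y G, MvPolynomial.eval y (σ G) = MvPolynomial.eval (y - φ y • u) G := by
    intro y G
    have : (MvPolynomial.aeval y).comp σ = MvPolynomial.aeval (R := ℂ) (y - φ y • u) := by
      apply MvPolynomial.algHom_ext
      intro s
      simp [σ, MvPolynomial.aeval_eq_eval, eval_linFormPoly, mul_comm]
    simpa [MvPolynomial.aeval_eq_eval] using DFunLike.congr_fun this G
  have hker : ∀ y, φ (y - φ y • u) = 0 := fun y => by simp [hu]
  have hσφ : σ (linFormPoly φ) = 0 := by
    apply MvPolynomial.funext
    intro y
    rw [hev, eval_linFormPoly, hker, map_zero]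
  have hsub : ∀ G, linFormPoly φ ∣ G - σ G := by
    intro G
    rw [← Ideal.mem_span_singleton, ← Ideal.Quotient.mk_eq_mk_iff_sub_mem]
    have : Ideal.Quotient.mkₐ ℂ (Ideal.span {linFormPoly φ}) =
        (Ideal.Quotient.mkₐ ℂ (Ideal.span {linFormPoly φ})).comp σ := by
      apply MvPolynomial.algHom_ext
      intro s
      have h0 : Ideal.Quotient.mk (Ideal.span {linFormPoly φ}) (linFormPoly φ) = 0 :=
        Ideal.Quotient.eq_zero_iff_mem.2 (Ideal.mem_span_singleton_self _)
      simp [σ, h0]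
    exact DFunLike.congr_fun this G
  refine ⟨σ, fun G => ⟨?_, fun h => ?_⟩, fun y => ⟨_, hker y, hev y⟩⟩
  · rintro ⟨H, rfl⟩
    rw [map_mul, hσφ, zero_mul]
  · simpa [h] using hsub G

lemma linFormPoly_ne_zero {φ : (Fin 3 → ℂ) →ₗ[ℂ] ℂ} (hφ : φ ≠ 0) : linFormPoly φ ≠ 0 := by
  intro h
  apply hφ
  ext1 s
  apply LinearMap.ext
  intro t
  simp [← eval_linFormPoly, h]

lemma linFormPoly_prime {φ : (Fin 3 → ℂ) →ₗ[ℂ] ℂ} (hφ : φ ≠ 0) : Prime (linFormPoly φ) := by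
  obtain ⟨σ, hσ, -⟩ := exists_projection φ hφ
  refine ⟨linFormPoly_ne_zero hφ, fun h => ?_, fun a b h => ?_⟩
  · have := (hσ 1).1 h.dvd
    simp at this
  · rw [hσ, map_mul, mul_eq_zero] at h
    rwa [hσ, hσ]

lemma linFormPoly_dvd {φ : (Fin 3 → ℂ) →ₗ[ℂ] ℂ} (hφ : φ ≠ 0) {G : MvPolynomial (Fin 3) ℂ}
    (h : ∀ y, φ y = 0 → MvPolynomial.eval y G = 0) : linFormPoly φ ∣ G := by
  obtain ⟨σ, hσ, hev⟩ := exists_projection φ hφ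
  rw [hσ]
  apply MvPolynomial.funext
  intro y
  obtain ⟨z, hz, hzG⟩ := hev y
  rw [hzG, h z hz, map_zero]

lemma eval_eq_zero_of_linFormPoly_dvd {φ : (Fin 3 → ℂ) →ₗ[ℂ] ℂ} {G : MvPolynomial (Fin 3) ℂ}
    (h : linFormPoly φ ∣ G) {y : Fin 3 → ℂ} (hy : φ y = 0) : MvPolynomial.eval y G = 0 := by
  obtain ⟨H, rfl⟩ := h
  rw [map_mul, eval_linFormPoly, hy, zero_mul]

/-! ### Multiplicity of a polynomial at a point -/

/-- The Taylor expansion `G ↦ G(x + T·Y)` at `x`, as a polynomial in `T` whose coefficients are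
polynomials in a generic direction `Y`. The polynomial `G` vanishes to order at least `a` at `x`
if and only if `T ^ a` divides `taylorAt x G`. -/
noncomputable def taylorAt (x : Fin 3 → ℂ) :
    MvPolynomial (Fin 3) ℂ →ₐ[ℂ] Polynomial (MvPolynomial (Fin 3) ℂ) :=
  MvPolynomial.aeval fun s =>
    Polynomial.C (MvPolynomial.C (x s)) + Polynomial.X * Polynomial.C (MvPolynomial.X s)

lemma taylorAt_linFormPoly (x : Fin 3 → ℂ) (φ : (Fin 3 → ℂ) →ₗ[ℂ] ℂ) :
    taylorAt x (linFormPoly φ) =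
      Polynomial.C (MvPolynomial.C (φ x)) + Polynomial.X * Polynomial.C (linFormPoly φ) := by
  rw [← eval_linFormPoly φ x]
  simp only [linFormPoly, taylorAt, map_sum, map_mul, MvPolynomial.aeval_X, MvPolynomial.eval_C,
    MvPolynomial.eval_X, mul_sum, ← sum_add_distrib]
  refine sum_congr rfl fun s _ => ?_
  have : MvPolynomial.aeval (R := ℂ) (fun s => Polynomial.C (MvPolynomial.C (x s)) +
      Polynomial.X * Polynomial.C (MvPolynomial.X s)) (MvPolynomial.C (φ (Pi.single s 1))) =
      Polynomial.C (MvPolynomial.C (σ := Fin 3) (φ (Pi.single s 1))) := by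
    rw [MvPolynomial.aeval_C]; rfl
  rw [this]
  ring

/-- The restriction `T ↦ G(y + T·q)` of `G` to a parametrized affine line. -/
noncomputable def alongLine (y q : Fin 3 → ℂ) :
    MvPolynomial (Fin 3) ℂ →ₐ[ℂ] Polynomial ℂ :=
  MvPolynomial.aeval fun s => Polynomial.C (y s) + Polynomial.X * Polynomial.C (q s)

lemma map_taylorAt (x q : Fin 3 → ℂ) (G : MvPolynomial (Fin 3) ℂ) :
    (taylorAt x G).map (MvPolynomial.eval q) = alongLine x q G := by
  have : (Polynomial.mapAlgHom (MvPolynomial.aeval (R := ℂ) q)).comp (taylorAt x) =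
      alongLine x q := by
    apply MvPolynomial.algHom_ext
    intro s
    simp [taylorAt, alongLine]
  exact DFunLike.congr_fun this G

lemma alongLine_comp (y q : Fin 3 → ℂ) (t : ℂ) (G : MvPolynomial (Fin 3) ℂ) :
    (alongLine (y + t • q) q G).comp (Polynomial.X - Polynomial.C t) = alongLine y q G := by
  have : (Polynomial.aeval (R := ℂ) (Polynomial.X - Polynomial.C t)).comp
      (alongLine (y + t • q) q) = alongLine y q := by
    apply MvPolynomial.algHom_ext
    intro s
    simp [alongLine, Polynomial.aeval_def]
    ring
  exact DFunLike.congr_fun this G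

lemma eval_alongLine (y q : Fin 3 → ℂ) (G : MvPolynomial (Fin 3) ℂ) :
    (alongLine y q G).eval 0 = MvPolynomial.eval y G := by
  have : (Polynomial.aeval (R := ℂ) (0 : ℂ)).comp (alongLine y q) = MvPolynomial.aeval y := by
    apply MvPolynomial.algHom_ext
    intro s
    simp [alongLine]
  simpa [MvPolynomial.aeval_eq_eval, Polynomial.coe_aeval_eq_eval] using DFunLike.congr_fun this G

/-- The coefficient of `T ^ w` in `G(y + T·q)`, for `G` homogeneous of degree `w`, is `G(q)`. -/
lemma alongLine_degree {G : MvPolynomial (Fin 3) ℂ} {w : ℕ} (hG : G.IsHomogeneous w)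
    (y q : Fin 3 → ℂ) (hq : MvPolynomial.eval q G = 0) : (alongLine y q G).degree < w := by
  have lin : ∀ s, (Polynomial.C (y s) + Polynomial.X * Polynomial.C (q s)).natDegree ≤ 1 := by
    intro s; compute_degree
  have linc : ∀ s, (Polynomial.C (y s) + Polynomial.X * Polynomial.C (q s)).coeff 1 = q s := by
    intro s; simp [Polynomial.coeff_C]
  have key : ∀ e ∈ G.support, ∀ j, w ≤ j →
      (∏ s, (Polynomial.C (y s) + Polynomial.X * Polynomial.C (q s)) ^ e s).coeff j =
        if j = w then ∏ s, q s ^ e s else 0 := by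
    intro e he j hj
    have hdeg : ∑ s, e s = w := by
      have := hG.degree_eq_sum_deg_support he
      rw [this]
      exact (sum_subset (subset_univ _) fun s _ hs => by simpa using hs).symm
    split_ifs with h
    · subst h
      rw [← hdeg]
      have hpow : ∀ s, ((Polynomial.C (y s) + Polynomial.X * Polynomial.C (q s)) ^ e s).natDegree
          ≤ e s := fun s => by simpa using Polynomial.natDegree_pow_le_of_le (e s) (lin s)
      have hcoeff : ∀ s, ((Polynomial.C (y s) + Polynomial.X * Polynomial.C (q s)) ^ e s).coeff
          (e s) = q s ^ e s := fun s => by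
        simpa [linc] using Polynomial.coeff_pow_of_natDegree_le (m := e s) (lin s)
      simp only [Fin.prod_univ_three, Fin.sum_univ_three]
      rw [Polynomial.coeff_mul_add_eq_of_natDegree_le
          (Polynomial.natDegree_mul_le_of_le (hpow 0) (hpow 1)) (hpow 2),
        Polynomial.coeff_mul_add_eq_of_natDegree_le (hpow 0) (hpow 1), hcoeff, hcoeff, hcoeff]
    · apply Polynomial.coeff_eq_zero_of_natDegree_lt
      refine lt_of_le_of_lt (Polynomial.natDegree_prod_le _ _) ?_
      refine lt_of_le_of_lt (sum_le_sum fun s _ =>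
        Polynomial.natDegree_pow_le_of_le (e s) (lin s)) ?_
      simp only [mul_one, hdeg]
      omega
  rw [Polynomial.degree_lt_iff_coeff_zero]
  intro j hj
  have hexp : alongLine y q G = ∑ e ∈ G.support, Polynomial.C (G.coeff e) *
      ∏ s, (Polynomial.C (y s) + Polynomial.X * Polynomial.C (q s)) ^ e s := by
    rw [alongLine, MvPolynomial.aeval_def, MvPolynomial.eval₂_eq']
    rfl
  rw [hexp, Polynomial.finsetSum_coeff]
  simp only [Polynomial.coeff_C_mul]
  rw [sum_congr rfl fun e he => by rw [key e he j hj]]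
  split_ifs
  · rw [← hq, MvPolynomial.eval_eq']
  · simp

lemma eval_smul_of_homogeneous {G : MvPolynomial (Fin 3) ℂ} {w : ℕ} (hG : G.IsHomogeneous w)
    (c : ℂ) (q : Fin 3 → ℂ) :
    MvPolynomial.eval (c • q) G = c ^ w * MvPolynomial.eval q G := by
  rw [MvPolynomial.eval_eq', MvPolynomial.eval_eq', mul_sum]
  refine sum_congr rfl fun e he => ?_
  have hdeg : ∑ s, e s = w := by
    rw [hG.degree_eq_sum_deg_support he]
    exact (sum_subset (subset_univ _) fun s _ hs => by simpa using hs).symm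
  simp only [Pi.smul_apply, smul_eq_mul, mul_pow, prod_mul_distrib, prod_pow_eq_pow_sum, hdeg]
  ring

lemma homogeneous_of_mul {F H : MvPolynomial (Fin 3) ℂ} {f w : ℕ} (hF : F ≠ 0) (hH : H ≠ 0)
    (hFf : F.IsHomogeneous f) (h : (F * H).IsHomogeneous w) :
    ∃ w', w = f + w' ∧ H.IsHomogeneous w' := by
  have hcomp : ∀ j, MvPolynomial.homogeneousComponent (f + j) (F * H) =
      F * MvPolynomial.homogeneousComponent j H := by
    intro j
    conv_lhs => rw [← MvPolynomial.sum_homogeneousComponent H, mul_sum, map_sum]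
    have : ∀ i, MvPolynomial.homogeneousComponent (f + j)
        (F * MvPolynomial.homogeneousComponent i H) =
        if i = j then F * MvPolynomial.homogeneousComponent i H else 0 := by
      intro i
      rw [MvPolynomial.homogeneousComponent_of_mem
        (hFf.mul (MvPolynomial.homogeneousComponent_isHomogeneous i H))]
      simp [eq_comm]
    simp only [this, sum_ite_eq', mem_range]
    split_ifs with hj
    · rfl
    · rw [MvPolynomial.homogeneousComponent_eq_zero _ _ (by omega), mul_zero]
  have hdeg : ∀ j, MvPolynomial.homogeneousComponent j H ≠ 0 → w = f + j := by
    intro j hj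
    by_contra hne
    have h0 := hcomp j
    rw [MvPolynomial.homogeneousComponent_of_mem h] at h0
    rw [if_neg (by omega)] at h0
    exact mul_ne_zero hF hj h0.symm
  obtain ⟨j, hj⟩ : ∃ j, MvPolynomial.homogeneousComponent j H ≠ 0 := by
    by_contra! hall
    apply hH
    rw [← MvPolynomial.sum_homogeneousComponent H]
    exact sum_eq_zero fun i _ => hall i
  refine ⟨j, hdeg j hj, ?_⟩
  rw [← MvPolynomial.sum_homogeneousComponent H]
  refine MvPolynomial.IsHomogeneous.sum _ _ _ fun i _ => ?_
  by_cases hi : MvPolynomial.homogeneousComponent i H = 0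
  · rw [hi]; exact MvPolynomial.isHomogeneous_zero _ _ _
  · have : i = j := by have := hdeg i hi; have := hdeg j hj; omega
    rw [this]
    exact MvPolynomial.homogeneousComponent_isHomogeneous j H

/-! ### The graded ring attached to the multinet -/

/-- The homogeneous polynomials of degree `w` whose multiplicity at each `p ∈ X` is at least
`w * n p / d`, i.e. at least the rounded up quotient. For `w = d` this is the linear system of
curves of degree `d` with multiplicity at least `n p` at the base points, and the sum over all `w`
is a graded ring. -/
noncomputable def sysOf (X : Finset (Submodule ℂ (Fin 3 → ℂ)))
    (n : Submodule ℂ (Fin 3 → ℂ) → ℕ) (d w : ℕ) : Submodule ℂ (MvPolynomial (Fin 3) ℂ) where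
  carrier := {G | G.IsHomogeneous w ∧ ∀ p ∈ X, ∀ x ∈ p, x ≠ 0 →
    Polynomial.X ^ ((w * n p) ⌈/⌉ d) ∣ taylorAt x G}
  add_mem' := fun ha hb => ⟨ha.1.add hb.1, fun p hp x hx h0 => by
    rw [map_add]; exact dvd_add (ha.2 p hp x hx h0) (hb.2 p hp x hx h0)⟩
  zero_mem' := ⟨MvPolynomial.isHomogeneous_zero _ _ _, fun p hp x hx h0 => by simp⟩
  smul_mem' := fun c G hG => ⟨by
      rw [MvPolynomial.smul_eq_C_mul]; exact hG.1.C_mul c, fun p hp x hx h0 => by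
    rw [map_smul]; exact dvd_smul_of_dvd c (hG.2 p hp x hx h0)⟩

section sys

variable {X : Finset (Submodule ℂ (Fin 3 → ℂ))} {n : Submodule ℂ (Fin 3 → ℂ) → ℕ} {d : ℕ}

lemma one_mem_sysOf : (1 : MvPolynomial (Fin 3) ℂ) ∈ sysOf X n d 0 :=
  ⟨MvPolynomial.isHomogeneous_one _ _, fun p hp x hx h0 => by simp⟩

lemma mul_mem_sysOf (hd : 0 < d) {w w' : ℕ} {G G' : MvPolynomial (Fin 3) ℂ}
    (hG : G ∈ sysOf X n d w) (hG' : G' ∈ sysOf X n d w') : G * G' ∈ sysOf X n d (w + w') := by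
  refine ⟨hG.1.mul hG'.1, fun p hp x hx h0 => ?_⟩
  rw [map_mul]
  refine dvd_trans ?_ (mul_dvd_mul (hG.2 p hp x hx h0) (hG'.2 p hp x hx h0))
  rw [← pow_add]
  apply pow_dvd_pow
  rw [ceilDiv_le_iff_le_smul hd, smul_add, add_mul]
  exact add_le_add (le_smul_ceilDiv hd) (le_smul_ceilDiv hd)

lemma pow_mem_sysOf (hd : 0 < d) {w : ℕ} {G : MvPolynomial (Fin 3) ℂ}
    (hG : G ∈ sysOf X n d w) (s : ℕ) : G ^ s ∈ sysOf X n d (s * w) := by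
  induction s with
  | zero => simpa using one_mem_sysOf
  | succ s ih => rw [pow_succ, Nat.succ_mul]; exact mul_mem_sysOf hd ih hG

/-- A member of degree `w` meets the line `ℓ` at the points of `X` with total multiplicity at
least `w`; if it also contains a point `q` of `ℓ` outside `X`, it contains all of `ℓ`. -/
lemma vanish_on_line (hd : 0 < d) (hX : ∀ p ∈ X, Module.finrank ℂ p = 1)
    {ℓ : Submodule ℂ (Fin 3 → ℂ)} (hℓ : Module.finrank ℂ ℓ = 2)
    (hsum : d ≤ ∑ p ∈ X.filter (fun p => p ≤ ℓ), n p) {w : ℕ} {G : MvPolynomial (Fin 3) ℂ}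
    (hG : G ∈ sysOf X n d w) {q : Fin 3 → ℂ} (hqℓ : q ∈ ℓ)
    (hqX : ∀ p ∈ X, q ∉ p)
    (hq : MvPolynomial.eval q G = 0) {y : Fin 3 → ℂ} (hy : y ∈ ℓ) :
    MvPolynomial.eval y G = 0 := by
  by_cases hyq : ∃ c : ℂ, y = c • q
  · obtain ⟨c, rfl⟩ := hyq
    rw [eval_smul_of_homogeneous hG.1, hq, mul_zero]
  -- each point of `X` on `ℓ` is met exactly once by the affine line `y + t q`
  have hex : ∀ p, p ∈ X.filter (fun p => p ≤ ℓ) → ∃ t : ℂ, y + t • q ∈ p := by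
    intro p hp
    rw [mem_filter] at hp
    have hlt : p < p ⊔ Submodule.span ℂ {q} := by
      refine lt_of_le_of_ne le_sup_left fun h => hqX p hp.1 ?_
      rw [h]
      exact Submodule.mem_sup_right (Submodule.mem_span_singleton_self q)
    have hle : p ⊔ Submodule.span ℂ {q} ≤ ℓ :=
      sup_le hp.2 (by simpa using hqℓ)
    have heq : p ⊔ Submodule.span ℂ {q} = ℓ := by
      apply Submodule.eq_of_le_of_finrank_le hle
      have := Submodule.finrank_lt_finrank_of_lt hlt
      rw [hX p hp.1] at this
      omega
    rw [← heq, Submodule.mem_sup] at hy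
    obtain ⟨a, ha, b, hb, rfl⟩ := hy
    obtain ⟨c, rfl⟩ := Submodule.mem_span_singleton.1 hb
    exact ⟨-c, by simpa using ha⟩
  choose! t ht using hex
  have hne : ∀ p, y + t p • q ≠ 0 := fun p h =>
    hyq ⟨-t p, by rw [neg_smul]; exact eq_neg_of_add_eq_zero_left h⟩
  have hdvd : ∏ p ∈ X.filter (fun p => p ≤ ℓ),
      (Polynomial.X - Polynomial.C (t p)) ^ ((w * n p) ⌈/⌉ d) ∣ alongLine y q G := by
    apply Finset.prod_dvd_of_coprime
    · intro p hp p' hp' hpp'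
      apply IsCoprime.pow
      apply Polynomial.isCoprime_X_sub_C_of_isUnit_sub
      rw [isUnit_iff_ne_zero, sub_ne_zero]
      intro htt
      apply hpp'
      have h1 := ht p hp
      have h2 := ht p' hp'
      rw [← htt] at h2
      have hs : ∀ r ∈ X, y + t p • q ∈ r → Submodule.span ℂ {y + t p • q} = r := by
        intro r hr hmem
        apply Submodule.eq_of_le_of_finrank_le (by simpa using hmem)
        rw [hX r hr, finrank_span_singleton (hne p)]
      rw [← hs p (mem_filter.1 hp).1 h1, hs p' (mem_filter.1 hp').1 h2]
    · intro p hp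
      have := hG.2 p (mem_filter.1 hp).1 _ (ht p hp) (hne p)
      have := Polynomial.map_dvd (MvPolynomial.eval q) this
      rw [map_taylorAt, Polynomial.map_pow, Polynomial.map_X] at this
      obtain ⟨Q, hQ⟩ := this
      rw [← alongLine_comp y q (t p) G, hQ, Polynomial.mul_comp, Polynomial.pow_comp,
        Polynomial.X_comp]
      exact dvd_mul_right _ _
  have hzero : alongLine y q G = 0 := by
    refine Polynomial.eq_zero_of_dvd_of_degree_lt hdvd
      (lt_of_lt_of_le (alongLine_degree hG.1 y q hq) ?_)
    rw [Polynomial.degree_prod]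
    simp only [Polynomial.degree_pow, Polynomial.degree_X_sub_C]
    have : w ≤ ∑ p ∈ X.filter (fun p => p ≤ ℓ), (w * n p) ⌈/⌉ d := by
      refine Nat.le_of_mul_le_mul_left ?_ hd
      calc d * w ≤ (∑ p ∈ X.filter (fun p => p ≤ ℓ), n p) * w := Nat.mul_le_mul_right _ hsum
        _ = ∑ p ∈ X.filter (fun p => p ≤ ℓ), w * n p := by
          rw [sum_mul]; exact sum_congr rfl fun _ _ => mul_comm _ _
        _ ≤ ∑ p ∈ X.filter (fun p => p ≤ ℓ), d * ((w * n p) ⌈/⌉ d) :=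
          sum_le_sum fun p _ => le_smul_ceilDiv hd
        _ = _ := by rw [mul_sum]
    simp only [nsmul_eq_mul, mul_one]
    exact_mod_cast this
  rw [← eval_alongLine y q, hzero, Polynomial.eval_zero]

/-- `F`, homogeneous of degree `f`, has multiplicity exactly `f * n p / d` at each `p ∈ X`. -/
def ExactMult (X : Finset (Submodule ℂ (Fin 3 → ℂ))) (n : Submodule ℂ (Fin 3 → ℂ) → ℕ)
    (d f : ℕ) (F : MvPolynomial (Fin 3) ℂ) : Prop :=
  F ≠ 0 ∧ F.IsHomogeneous f ∧ ∀ p ∈ X, ∀ x ∈ p, x ≠ 0 → ∃ a U,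
    taylorAt x F = Polynomial.X ^ a * U ∧ ¬ Polynomial.X ∣ U ∧ f * n p = d * a

lemma ExactMult.mem (hd : 0 < d) {f : ℕ} {F : MvPolynomial (Fin 3) ℂ}
    (hF : ExactMult X n d f F) : F ∈ sysOf X n d f := by
  refine ⟨hF.2.1, fun p hp x hx h0 => ?_⟩
  obtain ⟨a, U, h, -, ha⟩ := hF.2.2 p hp x hx h0
  rw [h]
  refine (pow_dvd_pow _ ?_).trans (dvd_mul_right _ _)
  rw [ceilDiv_le_iff_le_smul hd, ha, smul_eq_mul]

lemma ExactMult.div (hd : 0 < d) {f w : ℕ} {F H : MvPolynomial (Fin 3) ℂ}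
    (hF : ExactMult X n d f F) (hH : H ≠ 0) (h : F * H ∈ sysOf X n d w) :
    ∃ w', w = f + w' ∧ H ∈ sysOf X n d w' := by
  obtain ⟨w', hw', hH'⟩ := homogeneous_of_mul hF.1 hH hF.2.1 h.1
  refine ⟨w', hw', hH', fun p hp x hx h0 => ?_⟩
  obtain ⟨a, U, hU, hUX, ha⟩ := hF.2.2 p hp x hx h0
  have hdvd := h.2 p hp x hx h0
  rw [map_mul, hU, mul_assoc] at hdvd
  have hle : a + (w' * n p) ⌈/⌉ d ≤ (w * n p) ⌈/⌉ d := by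
    have h1 : a ≤ (w * n p) ⌈/⌉ d := by
      refine Nat.le_of_mul_le_mul_left (le_trans ?_ (le_smul_ceilDiv hd)) hd
      rw [← ha, hw']
      exact Nat.mul_le_mul_right _ (Nat.le_add_right _ _)
    have h2 : (w' * n p) ⌈/⌉ d ≤ (w * n p) ⌈/⌉ d - a := by
      rw [ceilDiv_le_iff_le_smul hd, smul_eq_mul, Nat.mul_sub, ← ha]
      have := le_smul_ceilDiv (b := w * n p) hd
      rw [smul_eq_mul] at this
      have h3 : w * n p = f * n p + w' * n p := by rw [hw']; ring
      omega
    omega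
  have hdvd' := (pow_dvd_pow Polynomial.X hle).trans hdvd
  rw [pow_add] at hdvd'
  have := (mul_dvd_mul_iff_left (pow_ne_zero a Polynomial.X_ne_zero)).1 hdvd'
  exact Polynomial.prime_X.pow_dvd_of_dvd_mul_left _ hUX this

end sys

/-! ### Reduced classes and divisibility -/

section classes

variable {X : Finset (Submodule ℂ (Fin 3 → ℂ))} {n : Submodule ℂ (Fin 3 → ℂ) → ℕ} {d : ℕ}
  {A : Finset (Submodule ℂ (Fin 3 → ℂ))}
  {α : Submodule ℂ (Fin 3 → ℂ) → ((Fin 3 → ℂ) →ₗ[ℂ] ℂ)}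

lemma eq_of_linFormPoly_dvd {ℓ ℓ' : Submodule ℂ (Fin 3 → ℂ)}
    (h2 : Module.finrank ℂ ℓ = 2) (h2' : Module.finrank ℂ ℓ' = 2)
    (hk : ℓ = LinearMap.ker (α ℓ)) (hk' : ℓ' = LinearMap.ker (α ℓ'))
    (h : linFormPoly (α ℓ) ∣ linFormPoly (α ℓ')) : ℓ = ℓ' := by
  apply Submodule.eq_of_le_of_finrank_le _ (by omega)
  intro x hx
  rw [hk, LinearMap.mem_ker] at hx
  rw [hk', LinearMap.mem_ker, ← eval_linFormPoly]
  exact eval_eq_zero_of_linFormPoly_dvd h hx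

lemma span_eq_point {p : Submodule ℂ (Fin 3 → ℂ)} (hp : Module.finrank ℂ p = 1)
    {x : Fin 3 → ℂ} (hx : x ∈ p) (h0 : x ≠ 0) : Submodule.span ℂ {x} = p := by
  apply Submodule.eq_of_le_of_finrank_le (by simpa using hx)
  rw [hp, finrank_span_singleton h0]

lemma exactMult_prod (hX : ∀ p ∈ X, Module.finrank ℂ p = 1)
    (hα0 : ∀ ℓ ∈ A, α ℓ ≠ 0) (hker : ∀ ℓ ∈ A, ℓ = LinearMap.ker (α ℓ))
    (m' : Submodule ℂ (Fin 3 → ℂ) → ℕ) (v f : ℕ) (hvf : v * f = d)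
    (hf : ∑ ℓ ∈ A, m' ℓ = f)
    (hn : ∀ p ∈ X, v * ∑ ℓ ∈ A.filter (fun ℓ => p ≤ ℓ), m' ℓ = n p) :
    ExactMult X n d f (∏ ℓ ∈ A, linFormPoly (α ℓ) ^ m' ℓ) := by
  refine ⟨prod_ne_zero_iff.2 fun ℓ hℓ => pow_ne_zero _ (linFormPoly_ne_zero (hα0 ℓ hℓ)), ?_, ?_⟩
  · rw [← hf]
    refine MvPolynomial.IsHomogeneous.prod _ _ _ fun ℓ _ => ?_
    simpa using (linFormPoly_homogeneous (α ℓ)).pow (m' ℓ)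
  · intro p hp x hx h0
    refine ⟨∑ ℓ ∈ A.filter (fun ℓ => p ≤ ℓ), m' ℓ,
      (∏ ℓ ∈ A.filter (fun ℓ => p ≤ ℓ), Polynomial.C (linFormPoly (α ℓ)) ^ m' ℓ) *
      ∏ ℓ ∈ A.filter (fun ℓ => ¬ p ≤ ℓ), (taylorAt x (linFormPoly (α ℓ))) ^ m' ℓ, ?_, ?_, ?_⟩
    · rw [map_prod, ← prod_filter_mul_prod_filter_not A (fun ℓ => p ≤ ℓ), ← mul_assoc,
        ← prod_pow_eq_pow_sum, ← prod_mul_distrib]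
      congr 1
      · refine prod_congr rfl fun ℓ hℓ => ?_
        rw [mem_filter] at hℓ
        have hz : α ℓ x = 0 := by
          have := hℓ.2 hx
          rwa [hker ℓ hℓ.1, LinearMap.mem_ker] at this
        rw [map_pow, taylorAt_linFormPoly, hz]
        simp [mul_pow]
        exact mul_comm _ _
      · exact prod_congr rfl fun ℓ _ => map_pow _ _ _
    · intro hdvd
      rcases Polynomial.prime_X.dvd_or_dvd hdvd with h | h
      · obtain ⟨ℓ, hℓ, h⟩ := (Polynomial.prime_X.dvd_finsetProd_iff _).1 h
        have h := Polynomial.prime_X.dvd_of_dvd_pow h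
        rw [Polynomial.X_dvd_iff, Polynomial.coeff_C_zero] at h
        exact linFormPoly_ne_zero (hα0 ℓ (mem_filter.1 hℓ).1) h
      · obtain ⟨ℓ, hℓ, h⟩ := (Polynomial.prime_X.dvd_finsetProd_iff _).1 h
        have h := Polynomial.prime_X.dvd_of_dvd_pow h
        rw [taylorAt_linFormPoly, Polynomial.X_dvd_iff] at h
        have h : α ℓ x = 0 := by simpa using h
        rw [mem_filter] at hℓ
        apply hℓ.2
        rw [← span_eq_point (hX p hp) hx h0, Submodule.span_singleton_le_iff_mem, hker ℓ hℓ.1]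
        exact h
    · rw [← hn p hp, ← hvf]
      ring

lemma ExactMult.div_pow (hd : 0 < d) {f : ℕ} {F H : MvPolynomial (Fin 3) ℂ}
    (hF : ExactMult X n d f F) (hH : H ≠ 0) (s : ℕ) {w : ℕ} (h : F ^ s * H ∈ sysOf X n d w) :
    ∃ w', H ∈ sysOf X n d w' := by
  induction s generalizing w with
  | zero => exact ⟨w, by simpa using h⟩
  | succ s ih =>
    rw [pow_succ', mul_assoc] at h
    obtain ⟨w', -, hdiv⟩ := hF.div hd (mul_ne_zero (pow_ne_zero _ hF.1) hH) h
    exact ih hdiv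

/-- A member `G` of the graded ring that contains one point of a line of the class `A` outside
`X` is divisible by the reduced class product `F`. It contains that line; comparing its orders
`r ℓ` along the lines of `A` with the exponents `m' ℓ`, remove from a power of `G` the largest
possible power of `F`. The quotient does not vanish on some line of `A`, hence by connectedness of
the class outside `X` on none of them, which forces `r` to be proportional to `m'`. -/
lemma class_dvd (hd : 0 < d) (hX : ∀ p ∈ X, Module.finrank ℂ p = 1)
    (hA2 : ∀ ℓ ∈ A, Module.finrank ℂ ℓ = 2)
    (hα0 : ∀ ℓ ∈ A, α ℓ ≠ 0) (hker : ∀ ℓ ∈ A, ℓ = LinearMap.ker (α ℓ))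
    (hsum : ∀ ℓ ∈ A, d ≤ ∑ p ∈ X.filter (fun p => p ≤ ℓ), n p)
    {m' : Submodule ℂ (Fin 3 → ℂ) → ℕ} (hm' : ∀ ℓ ∈ A, 0 < m' ℓ) (hgcd : A.gcd m' = 1)
    (hconn : ∀ ℓ ∈ A, ∀ ℓ' ∈ A, Relation.ReflTransGen
        (fun a b => a ∈ A ∧ b ∈ A ∧ a ≠ b ∧ a ⊓ b ∉ X) ℓ ℓ')
    {f : ℕ} (hF : ExactMult X n d f (∏ ℓ ∈ A, linFormPoly (α ℓ) ^ m' ℓ))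
    {w : ℕ} {G : MvPolynomial (Fin 3) ℂ} (hG : G ∈ sysOf X n d w)
    {ℓ₀ : Submodule ℂ (Fin 3 → ℂ)} (hℓ₀ : ℓ₀ ∈ A) {q : Fin 3 → ℂ} (hq : q ∈ ℓ₀)
    (hqX : ∀ p ∈ X, q ∉ p) (hqG : MvPolynomial.eval q G = 0) :
    ∏ ℓ ∈ A, linFormPoly (α ℓ) ^ m' ℓ ∣ G := by
  rcases eq_or_ne G 0 with rfl | hG0
  · exact dvd_zero _
  set P : Submodule ℂ (Fin 3 → ℂ) → MvPolynomial (Fin 3) ℂ := fun ℓ => linFormPoly (α ℓ) with hPdef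
  have hprime : ∀ ℓ ∈ A, Prime (P ℓ) := fun ℓ hℓ => linFormPoly_prime (hα0 ℓ hℓ)
  have hinj : ∀ ℓ ∈ A, ∀ ℓ' ∈ A, P ℓ ∣ P ℓ' → ℓ = ℓ' := fun a ha b hb h =>
    eq_of_linFormPoly_dvd (hA2 a ha) (hA2 b hb) (hker a ha) (hker b hb) h
  -- a member of the graded ring vanishing at a point of `ℓ` outside `X` is divisible by `ℓ`
  have hline : ∀ {w : ℕ} {Q : MvPolynomial (Fin 3) ℂ}, Q ∈ sysOf X n d w → ∀ ℓ ∈ A, ∀ x ∈ ℓ,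
      (∀ p ∈ X, x ∉ p) → MvPolynomial.eval x Q = 0 → P ℓ ∣ Q := by
    intro w Q hQ ℓ hℓ x hx hxX hxQ
    refine linFormPoly_dvd (hα0 ℓ hℓ) fun y hy => ?_
    refine vanish_on_line hd hX (hA2 ℓ hℓ) (hsum ℓ hℓ) hQ hx hxX hxQ ?_
    rw [hker ℓ hℓ]
    exact hy
  -- products of powers of the forms divide as soon as each power does
  have hprod : ∀ (e : Submodule ℂ (Fin 3 → ℂ) → ℕ) (Q : MvPolynomial (Fin 3) ℂ),
      (∀ ℓ ∈ A, P ℓ ^ e ℓ ∣ Q) → ∏ ℓ ∈ A, P ℓ ^ e ℓ ∣ Q := by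
    intro e Q h
    refine Finset.prod_dvd_of_isRelPrime (fun ℓ hℓ ℓ' hℓ' hne => ?_) h
    refine IsRelPrime.pow ?_
    exact ((hprime ℓ hℓ).irreducible.isRelPrime_iff_not_dvd).2 fun h => hne (hinj ℓ hℓ ℓ' hℓ' h)
  have hfac : ∀ ℓ ∈ A, ∃ r G', G = P ℓ ^ r * G' ∧ ¬ P ℓ ∣ G' := by
    intro ℓ hℓ
    obtain ⟨G', h1, h2⟩ := (FiniteMultiplicity.of_prime_left (hprime ℓ hℓ)
      hG0).exists_eq_pow_mul_and_not_dvd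
    exact ⟨_, G', h1, h2⟩
  choose! r G' hr hG' using hfac
  obtain ⟨ℓs, hℓs, hmin⟩ := exists_min_image A (fun ℓ => (r ℓ : ℚ) / m' ℓ) ⟨ℓ₀, hℓ₀⟩
  have hmin' : ∀ ℓ ∈ A, m' ℓ * r ℓs ≤ r ℓ * m' ℓs := by
    intro ℓ hℓ
    have h := hmin ℓ hℓ
    have h1 : (0 : ℚ) < m' ℓ := by exact_mod_cast hm' ℓ hℓ
    have h2 : (0 : ℚ) < m' ℓs := by exact_mod_cast hm' ℓs hℓs
    rw [div_le_div_iff₀ h2 h1] at h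
    have : r ℓs * m' ℓ ≤ r ℓ * m' ℓs := by exact_mod_cast h
    rwa [mul_comm (m' ℓ)]
  obtain ⟨Q, hQ⟩ : (∏ ℓ ∈ A, P ℓ ^ m' ℓ) ^ r ℓs ∣ G ^ m' ℓs := by
    rw [← prod_pow]
    simp only [← pow_mul]
    refine hprod (fun ℓ => m' ℓ * r ℓs) _ fun ℓ hℓ => ?_
    refine (pow_dvd_pow _ (hmin' ℓ hℓ)).trans ?_
    rw [pow_mul]
    exact pow_dvd_pow_of_dvd ⟨_, hr ℓ hℓ⟩ _
  have hQ0 : Q ≠ 0 := by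
    rintro rfl
    rw [mul_zero] at hQ
    exact pow_ne_zero _ hG0 hQ
  obtain ⟨w', hQmem⟩ : ∃ w', Q ∈ sysOf X n d w' := by
    have := pow_mem_sysOf hd hG (m' ℓs)
    rw [hQ] at this
    exact hF.div_pow hd hQ0 _ this
  -- the order of `Q` along `ℓ`, in the form of a cancelled equation
  have hcancel : ∀ ℓ ∈ A, P ℓ ^ (r ℓ * m' ℓs) * G' ℓ ^ m' ℓs =
      P ℓ ^ (m' ℓ * r ℓs) * ((∏ a ∈ A.erase ℓ, P a ^ m' a) ^ r ℓs * Q) := by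
    intro ℓ hℓ
    rw [pow_mul, ← mul_pow, ← hr ℓ hℓ, hQ, ← mul_prod_erase A _ hℓ, mul_pow, ← pow_mul, mul_assoc]
  have hQs : ¬ P ℓs ∣ Q := by
    intro h
    have hc := hcancel ℓs hℓs
    rw [mul_comm (r ℓs)] at hc
    have hc := mul_left_cancel₀ (pow_ne_zero _ (hprime ℓs hℓs).ne_zero) hc
    apply hG' ℓs hℓs
    apply (hprime ℓs hℓs).dvd_of_dvd_pow (n := m' ℓs)
    rw [hc]
    exact h.mul_left _
  have hQall : ∀ ℓ ∈ A, ¬ P ℓ ∣ Q := by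
    intro ℓ hℓ
    induction hconn ℓs hℓs ℓ hℓ with
    | refl => exact hQs
    | @tail a b _ hab ih =>
      obtain ⟨haA, hbA, hne, hnX⟩ := hab
      intro hdvd
      apply ih haA
      have hrank : 1 ≤ Module.finrank ℂ (a ⊓ b : Submodule ℂ (Fin 3 → ℂ)) := by
        have h1 := Submodule.finrank_sup_add_finrank_inf_eq a b
        have h2 := Submodule.finrank_le (a ⊔ b)
        rw [hA2 a haA, hA2 b hbA] at h1
        simp only [Module.finrank_fintype_fun_eq_card, Fintype.card_fin] at h2
        omega
      have hnb : a ⊓ b ≠ ⊥ := by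
        intro h
        rw [h, finrank_bot] at hrank
        omega
      obtain ⟨x, hx, hx0⟩ := Submodule.exists_mem_ne_zero_of_ne_bot hnb
      have hlt : Module.finrank ℂ (a ⊓ b : Submodule ℂ (Fin 3 → ℂ)) < 2 := by
        rw [← hA2 a haA]
        apply Submodule.finrank_lt_finrank_of_lt
        refine lt_of_le_of_ne inf_le_left fun h => hne ?_
        exact Submodule.eq_of_le_of_finrank_le (inf_eq_left.1 h) (by rw [hA2 a haA, hA2 b hbA])
      refine hline hQmem a haA x hx.1 (fun p hp hxp => hnX ?_) ?_
      · rw [← span_eq_point (by omega) hx hx0, span_eq_point (hX p hp) hxp hx0]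
        exact hp
      · apply eval_eq_zero_of_linFormPoly_dvd hdvd
        have := hx.2
        rwa [hker b hbA] at this
  have hprop : ∀ ℓ ∈ A, r ℓ * m' ℓs = m' ℓ * r ℓs := by
    intro ℓ hℓ
    refine le_antisymm ?_ (hmin' ℓ hℓ)
    by_contra! hlt
    obtain ⟨e, he⟩ := Nat.exists_eq_add_of_lt hlt
    have hc := hcancel ℓ hℓ
    rw [he, add_assoc, pow_add, mul_assoc] at hc
    have hc := mul_left_cancel₀ (pow_ne_zero _ (hprime ℓ hℓ).ne_zero) hc
    have hdvd : P ℓ ∣ (∏ a ∈ A.erase ℓ, P a ^ m' a) ^ r ℓs * Q := by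
      rw [← hc, pow_succ', mul_assoc]
      exact dvd_mul_right _ _
    rcases (hprime ℓ hℓ).dvd_or_dvd hdvd with h | h
    · have h := (hprime ℓ hℓ).dvd_of_dvd_pow h
      obtain ⟨a, ha, h⟩ := ((hprime ℓ hℓ).dvd_finsetProd_iff _).1 h
      have h := (hprime ℓ hℓ).dvd_of_dvd_pow h
      rw [mem_erase] at ha
      exact ha.1 (hinj ℓ hℓ a ha.2 h).symm
    · exact hQall ℓ hℓ h
  obtain ⟨s, hs⟩ : m' ℓs ∣ r ℓs := by
    have h : m' ℓs ∣ A.gcd fun ℓ => m' ℓ * r ℓs :=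
      dvd_gcd fun ℓ hℓ => ⟨r ℓ, by rw [← hprop ℓ hℓ, mul_comm]⟩
    rw [Finset.gcd_mul_right, hgcd, one_mul] at h
    simpa using h
  have hrs : ∀ ℓ ∈ A, r ℓ = s * m' ℓ := by
    intro ℓ hℓ
    have h := hprop ℓ hℓ
    rw [hs] at h
    refine Nat.eq_of_mul_eq_mul_right (hm' ℓs hℓs) ?_
    rw [h]; ring
  have hs1 : 1 ≤ s := by
    by_contra! h
    have h0 : r ℓ₀ = 0 := by rw [hrs ℓ₀ hℓ₀, Nat.lt_one_iff.1 h, zero_mul]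
    apply hG' ℓ₀ hℓ₀
    have := hr ℓ₀ hℓ₀
    rw [h0, pow_zero, one_mul] at this
    rw [← this]
    exact hline hG ℓ₀ hℓ₀ q hq hqX hqG
  refine hprod m' G fun ℓ hℓ => (pow_dvd_pow _ ?_).trans ⟨_, hr ℓ hℓ⟩
  rw [hrs ℓ hℓ]
  exact Nat.le_mul_of_pos_left _ hs1

end classes

/-! ### Dimensions of the graded pieces -/

section dimension

variable {X : Finset (Submodule ℂ (Fin 3 → ℂ))} {n : Submodule ℂ (Fin 3 → ℂ) → ℕ} {d : ℕ}

lemma sysOf_le (w : ℕ) : sysOf X n d w ≤ MvPolynomial.homogeneousSubmodule (Fin 3) ℂ w :=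
  fun _ hG => hG.1

instance sysOf_finite (w : ℕ) : Module.Finite ℂ (sysOf X n d w) := by
  have : Module.Finite ℂ (MvPolynomial.homogeneousSubmodule (Fin 3) ℂ w) :=
    Module.Finite.iff_fg.2 (MvPolynomial.homogeneousSubmodule_fg _ _ w)
  exact Submodule.finiteDimensional_of_le (sysOf_le w)

lemma finrank_sysOf_zero : Module.finrank ℂ (sysOf X n d 0) ≤ 1 := by
  have hle : sysOf X n d 0 ≤ Submodule.span ℂ {(1 : MvPolynomial (Fin 3) ℂ)} := by
    refine (sysOf_le 0).trans ?_
    rw [MvPolynomial.homogeneousSubmodule_zero, Submodule.one_eq_span]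
  refine (Submodule.finrank_mono hle).trans ?_
  exact (finrank_span_singleton one_ne_zero).le

/-- The degrees in which some member of the graded ring does not vanish at `q`. -/
def nonvanishing (X : Finset (Submodule ℂ (Fin 3 → ℂ))) (n : Submodule ℂ (Fin 3 → ℂ) → ℕ)
    {d : ℕ} (hd : 0 < d) (q : Fin 3 → ℂ) : AddSubmonoid ℕ where
  carrier := {w | ∃ G ∈ sysOf X n d w, MvPolynomial.eval q G ≠ 0}
  zero_mem' := ⟨1, one_mem_sysOf, by simp⟩
  add_mem' := by
    rintro a b ⟨G, hG, hGq⟩ ⟨K, hK, hKq⟩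
    exact ⟨G * K, mul_mem_sysOf hd hG hK, by rw [map_mul]; exact mul_ne_zero hGq hKq⟩

/-- If the members vanishing at `q` are the multiples of `F`, evaluation at `q` gives an exact
sequence `0 → V_w → V_{w+f} → ℂ`, the first map being multiplication by `F`. -/
lemma finrank_step (hd : 0 < d) {f : ℕ} {F : MvPolynomial (Fin 3) ℂ} (hF : ExactMult X n d f F)
    {q : Fin 3 → ℂ} (hFq : MvPolynomial.eval q F = 0)
    (hdvd : ∀ w, ∀ G ∈ sysOf X n d w, MvPolynomial.eval q G = 0 → F ∣ G) (w : ℕ) :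
    Module.finrank ℂ (sysOf X n d (w + f)) = Module.finrank ℂ (sysOf X n d w) +
      if w + f ∈ nonvanishing X n hd q then 1 else 0 := by
  let ev : sysOf X n d (w + f) →ₗ[ℂ] ℂ :=
    (MvPolynomial.aeval (R := ℂ) q).toLinearMap.domRestrict _
  have hev : ∀ G, ev G = MvPolynomial.eval q G.1 := fun G => by
    simp [ev, MvPolynomial.aeval_eq_eval]
  let mul : sysOf X n d w →ₗ[ℂ] sysOf X n d (w + f) :=
    ((LinearMap.mulLeft ℂ F).domRestrict _).codRestrict _ fun G => by
      rw [add_comm]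
      exact mul_mem_sysOf hd (hF.mem hd) G.2
  have hmul : ∀ G, (mul G).1 = F * G.1 := fun G => rfl
  have hinj : Function.Injective mul := by
    intro G G' h
    apply Subtype.ext
    have := congrArg Subtype.val h
    rw [hmul, hmul] at this
    exact mul_left_cancel₀ hF.1 this
  have hker : LinearMap.ker ev = LinearMap.range mul := by
    ext G
    rw [LinearMap.mem_ker, hev, LinearMap.mem_range]
    constructor
    · intro h
      obtain ⟨H, hH⟩ := hdvd _ G.1 G.2 h
      rcases eq_or_ne H 0 with rfl | hH0
      · exact ⟨0, Subtype.ext (by rw [hmul, hH]; simp)⟩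
      · have hmem := G.2
        rw [hH] at hmem
        obtain ⟨w', hw', hH'⟩ := hF.div hd hH0 hmem
        obtain rfl : w = w' := by omega
        exact ⟨⟨H, hH'⟩, Subtype.ext (by rw [hmul, hH])⟩
    · rintro ⟨H, rfl⟩
      rw [hmul, map_mul, hFq, zero_mul]
  have hrn := LinearMap.finrank_range_add_finrank_ker ev
  rw [hker, LinearMap.finrank_range_of_inj hinj] at hrn
  rw [← hrn, add_comm]
  congr 1
  split_ifs with h
  · obtain ⟨G, hG, hGq⟩ := h
    have hsurj : LinearMap.range ev = ⊤ :=
      LinearMap.range_eq_top.2 (LinearMap.surjective fun h0 => hGq (by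
        rw [← hev ⟨G, hG⟩, h0, LinearMap.zero_apply]))
    rw [hsurj, finrank_top, Module.finrank_self]
  · have h0 : ev = 0 := by
      ext G
      by_contra hne
      exact h ⟨G.1, G.2, by rwa [← hev]⟩
    rw [h0, LinearMap.range_zero, finrank_bot]

end dimension

/-- A line is not covered by finitely many points. -/
lemma exists_mem_line_notMem {X : Finset (Submodule ℂ (Fin 3 → ℂ))}
    (hX : ∀ p ∈ X, Module.finrank ℂ p = 1)
    {ℓ : Submodule ℂ (Fin 3 → ℂ)} (hℓ : Module.finrank ℂ ℓ = 2) :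
    ∃ q ∈ ℓ, ∀ p ∈ X, q ∉ p := by
  obtain ⟨q, hq⟩ := Submodule.exists_forall_notMem_of_forall_ne_top
    (fun p : X => p.1.comap ℓ.subtype) (fun p h => by
      have hle : ℓ ≤ p.1 := Submodule.comap_subtype_eq_top.1 h
      have := Submodule.finrank_mono hle
      rw [hX p.1 p.2] at this
      omega)
  exact ⟨q.1, q.2, fun p hp h => hq ⟨p, hp⟩ h⟩

/-! ### The pencil -/

/-- The part of Bézout's theorem for a line of one class and the curve of another class: the
base points on a line of the multinet have total weight at least `d`. -/
lemma le_sum_base {ℓ : Submodule ℂ (Fin 3 → ℂ)} {B X : Finset (Submodule ℂ (Fin 3 → ℂ))}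
    {m n : Submodule ℂ (Fin 3 → ℂ) → ℕ} {d : ℕ} (hd : ∑ ℓ' ∈ B, m ℓ' = d)
    (hB : ∀ ℓ' ∈ B, ℓ ⊓ ℓ' ∈ X)
    (hn : ∀ p ∈ X, ∑ ℓ' ∈ B.filter (fun ℓ' => p ≤ ℓ'), m ℓ' = n p) :
    d ≤ ∑ p ∈ X.filter (fun p => p ≤ ℓ), n p := by
  have hmap : ∀ ℓ' ∈ B, ℓ ⊓ ℓ' ∈ X.filter (fun p => p ≤ ℓ) := fun ℓ' h =>
    mem_filter.2 ⟨hB ℓ' h, inf_le_left⟩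
  rw [← hd, ← sum_fiberwise_of_maps_to hmap]
  refine sum_le_sum fun p hp => ?_
  rw [← hn p (mem_filter.1 hp).1]
  refine sum_le_sum_of_subset fun ℓ' h => ?_
  rw [mem_filter] at h ⊢
  exact ⟨h.1, h.2 ▸ inf_le_right⟩

/-- Multinets lie in pencils: Let (L₁,…,L_k; m; X) be a multinet with
gcd of multiplicities 1, the lines given as kernels of pairwise non-proportional
nonzero linear forms α_ℓ, and C_i = ∏_{ℓ∈L_i} α_ℓ^{m(ℓ)}. Then C₁, C₂ are linearly
independent over ℂ and every C_i is a ℂ-linear combination of C₁ and C₂. -/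
theorem multinet_gives_pencil
    (L : Finset (Submodule ℂ (Fin 3 → ℂ)))
    (hL2 : ∀ ℓ ∈ L, Module.finrank ℂ ℓ = 2)
    (k d : ℕ) (hk : 3 ≤ k)
    (Li : Fin k → Finset (Submodule ℂ (Fin 3 → ℂ)))
    (hsub : ∀ i, Li i ⊆ L)
    (hcover : ∀ ℓ ∈ L, ∃ i, ℓ ∈ Li i)
    (hdisj : ∀ i j, i ≠ j → Disjoint (Li i) (Li j))
    (hne : ∀ i, (Li i).Nonempty)
    (m : Submodule ℂ (Fin 3 → ℂ) → ℕ)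
    (hm : ∀ ℓ ∈ L, 0 < m ℓ)
    (X : Finset (Submodule ℂ (Fin 3 → ℂ)))
    (hX : ∀ p ∈ X, Module.finrank ℂ p = 1 ∧ 3 ≤ (L.filter (fun ℓ => p ≤ ℓ)).card)
    (h1 : ∀ i, ∑ ℓ ∈ Li i, m ℓ = d)
    (h2 : ∀ i j, i ≠ j → ∀ ℓ ∈ Li i, ∀ ℓ' ∈ Li j, ℓ ⊓ ℓ' ∈ X)
    (n : Submodule ℂ (Fin 3 → ℂ) → ℕ)
    (h3 : ∀ p ∈ X, ∀ i, ∑ ℓ ∈ (Li i).filter (fun ℓ => p ≤ ℓ), m ℓ = n p)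
    (h4 : ∀ i, ∀ ℓ ∈ Li i, ∀ ℓ' ∈ Li i,
      Relation.ReflTransGen
        (fun a b => a ∈ Li i ∧ b ∈ Li i ∧ a ≠ b ∧ a ⊓ b ∉ X) ℓ ℓ')
    (hgcd : L.gcd m = 1)
    (α : Submodule ℂ (Fin 3 → ℂ) → ((Fin 3 → ℂ) →ₗ[ℂ] ℂ))
    (hα0 : ∀ ℓ ∈ L, α ℓ ≠ 0)
    (hker : ∀ ℓ ∈ L, ℓ = LinearMap.ker (α ℓ))
    (hprop : ∀ ℓ ∈ L, ∀ ℓ' ∈ L, ℓ ≠ ℓ' → ∀ t : ℂ, α ℓ ≠ t • α ℓ')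
    (P : Fin k → MvPolynomial (Fin 3) ℂ)
    (hP : ∀ i, P i = ∏ ℓ ∈ Li i, (linFormPoly (α ℓ)) ^ (m ℓ)) :
    LinearIndependent ℂ ![P ⟨0, by omega⟩, P ⟨1, by omega⟩]
    ∧ ∀ i : Fin k, ∃ a b : ℂ, P i = a • P ⟨0, by omega⟩ + b • P ⟨1, by omega⟩ := by
  have hX1 : ∀ p ∈ X, Module.finrank ℂ p = 1 := fun p hp => (hX p hp).1
  have hd : 0 < d := by
    obtain ⟨ℓ, hℓ⟩ := hne ⟨0, by omega⟩
    rw [← h1 ⟨0, by omega⟩]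
    exact sum_pos (fun ℓ h => hm ℓ (hsub _ h)) ⟨ℓ, hℓ⟩
  have hother : ∀ i : Fin k, ∃ j, j ≠ i := fun i => by
    have : Nontrivial (Fin k) := Fin.nontrivial_iff_two_le.2 (by omega)
    exact exists_ne i
  have hsum : ∀ i, ∀ ℓ ∈ Li i, d ≤ ∑ p ∈ X.filter (fun p => p ≤ ℓ), n p := by
    intro i ℓ hℓ
    obtain ⟨j, hj⟩ := hother i
    exact le_sum_base (h1 j) (h2 i j hj.symm ℓ hℓ) fun p hp => h3 p hp j
  -- `v i` is the gcd of the multiplicities of class `i`, so `P i = F i ^ v i` with `F i` primitive.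
  choose m' hm' hg' using fun i => Finset.extract_gcd m (hne i)
  set v : Fin k → ℕ := fun i => (Li i).gcd m with hvdef
  set f : Fin k → ℕ := fun i => ∑ ℓ ∈ Li i, m' i ℓ with hfdef
  set F : Fin k → MvPolynomial (Fin 3) ℂ :=
    fun i => ∏ ℓ ∈ Li i, linFormPoly (α ℓ) ^ m' i ℓ with hFdef
  have hvf : ∀ i, v i * f i = d := fun i => by
    rw [← h1 i, hfdef, mul_sum]
    exact sum_congr rfl fun ℓ hℓ => (hm' i ℓ hℓ).symm
  have hm'pos : ∀ i, ∀ ℓ ∈ Li i, 0 < m' i ℓ := fun i ℓ hℓ => by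
    have h := hm ℓ (hsub i hℓ)
    rw [hm' i ℓ hℓ] at h
    exact Nat.pos_of_mul_pos_left h
  have hF : ∀ i, ExactMult X n d (f i) (F i) := fun i => by
    refine exactMult_prod hX1 (fun ℓ h => hα0 ℓ (hsub i h)) (fun ℓ h => hker ℓ (hsub i h))
      (m' i) (v i) (f i) (hvf i) rfl fun p hp => ?_
    rw [← h3 p hp i, mul_sum]
    exact sum_congr rfl fun ℓ hℓ => (hm' i ℓ (mem_filter.1 hℓ).1).symm
  have hPF : ∀ i, P i = F i ^ v i := fun i => by
    rw [hP, hFdef, ← prod_pow]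
    refine prod_congr rfl fun ℓ hℓ => ?_
    rw [hm' i ℓ hℓ, ← pow_mul, mul_comm]
  have hPmem : ∀ i, P i ∈ sysOf X n d d := fun i => by
    have h := pow_mem_sysOf hd ((hF i).mem hd) (v i)
    rwa [hvf, ← hPF] at h
  -- `q i` is a point of class `i` off the base locus: `P i` vanishes there, no other `P j` does.
  choose l hl using hne
  choose q hql hqX using fun i => exists_mem_line_notMem hX1 (hL2 _ (hsub i (hl i)))
  have hFq : ∀ i, MvPolynomial.eval (q i) (F i) = 0 := fun i => by
    refine eval_eq_zero_of_linFormPoly_dvd (φ := α (l i)) ?_ ?_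
    · exact (dvd_pow_self _ (hm'pos i _ (hl i)).ne').trans
        (dvd_prod_of_mem (fun ℓ => linFormPoly (α ℓ) ^ m' i ℓ) (hl i))
    · have h := hql i
      rwa [hker _ (hsub i (hl i)), LinearMap.mem_ker] at h
  have hPq : ∀ i, MvPolynomial.eval (q i) (P i) = 0 := fun i => by
    have hv : v i ≠ 0 := fun h => by
      have := hvf i
      rw [h, zero_mul] at this
      omega
    rw [hPF, map_pow, hFq, zero_pow hv]
  have hPq' : ∀ i j, i ≠ j → MvPolynomial.eval (q i) (P j) ≠ 0 := fun i j hij => by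
    rw [hP, map_prod]
    refine prod_ne_zero_iff.2 fun ℓ hℓ => ?_
    rw [map_pow, eval_linFormPoly]
    refine pow_ne_zero _ fun h => hqX i _ (h2 i j hij _ (hl i) ℓ hℓ) ⟨hql i, ?_⟩
    have : q i ∈ LinearMap.ker (α ℓ) := h
    rwa [← hker ℓ (hsub j hℓ)] at this
  have hdim : Module.finrank ℂ (sysOf X n d d) ≤ 2 := by
    have := hilbert_le (k := k) (by omega) (fun w => Module.finrank ℂ (sysOf X n d w))
      (fun i => nonvanishing X n hd (q i)) f v hd hvf
      (fun i => by
        obtain ⟨j, hj⟩ := hother i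
        exact ⟨P j, hPmem j, hPq' i j hj.symm⟩)
      (fun i w => finrank_step hd (hF i) (hFq i)
        (fun w G hG hGq => class_dvd hd hX1 (fun ℓ h => hL2 ℓ (hsub i h))
          (fun ℓ h => hα0 ℓ (hsub i h)) (fun ℓ h => hker ℓ (hsub i h)) (hsum i)
          (hm'pos i) (hg' i) (h4 i) (hF i) hG (hl i) (hql i) (hqX i) hGq) w)
      (fun c hc => by
        rw [← Nat.dvd_one, ← hgcd]
        refine Finset.dvd_gcd fun ℓ hℓ => ?_
        obtain ⟨i, hi⟩ := hcover ℓ hℓ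
        exact (hc i).trans (Finset.gcd_dvd hi))
    exact this.trans (Nat.add_le_add_right finrank_sysOf_zero 1)
  have h01 : (⟨0, by omega⟩ : Fin k) ≠ ⟨1, by omega⟩ := by simp
  have hli : LinearIndependent ℂ ![P ⟨0, by omega⟩, P ⟨1, by omega⟩] := by
    refine LinearIndependent.pair_iff.2 fun a b hab => ⟨?_, ?_⟩
    · have h := congrArg (MvPolynomial.eval (q ⟨1, by omega⟩)) hab
      rw [map_add, MvPolynomial.smul_eval, MvPolynomial.smul_eval, hPq, mul_zero, add_zero,
        map_zero] at h
      exact (mul_eq_zero.1 h).resolve_right (hPq' _ _ h01.symm)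
    · have h := congrArg (MvPolynomial.eval (q ⟨0, by omega⟩)) hab
      rw [map_add, MvPolynomial.smul_eval, MvPolynomial.smul_eval, hPq, mul_zero, zero_add,
        map_zero] at h
      exact (mul_eq_zero.1 h).resolve_right (hPq' _ _ h01)
  refine ⟨hli, fun i => ?_⟩
  have hspan : Submodule.span ℂ {P ⟨0, by omega⟩, P ⟨1, by omega⟩} = sysOf X n d d := by
    refine Submodule.eq_of_le_of_finrank_le ?_ ?_
    · rw [Submodule.span_le]
      rintro G (rfl | rfl)
      exacts [hPmem _, hPmem _]
    · have h := finrank_span_eq_card hli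
      rw [Matrix.range_cons_cons_empty, Fintype.card_fin] at h
      rw [h]
      exact hdim
  obtain ⟨a, b, hab⟩ := Submodule.mem_span_pair.1 (hspan.symm ▸ hPmem i)
  exact ⟨a, b, hab.symm⟩
end

section
/- (Halphen-type inequality.) Let G₁, G₂, G₃ ∈ ℂ[x,y,z] be homogeneous polynomials, each a product of (not necessarily distinct) linear forms, and let e₁, e₂, e₃ be positive integers such that G₁^{e₁} + G₂^{e₂} = G₃^{e₃}, all three powers being homogeneous of the same degree d ≥ 1. Assume G₁^{e₁} and G₂^{e₂} have no common linear factor (equivalently, G₁ and G₂ are coprime). Then 1/e₁ + 1/e₂ + 1/e₃ > 1. -/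
/-!
Restrict the identity to a generic affine line `t ↦ p + t q` in `ℂ³`. A linear form `α` becomes
`α(p) + t α(q)`. For generic `q` every linear factor of `G₁` and `G₂` keeps degree one in `t`, so
`G₁ ^ e₁` and `G₂ ^ e₂` keep degree `d`. For generic `p` the restrictions of a factor `α` of `G₁`
and a factor `β` of `G₂` are coprime, because `α` and `β` are not proportional and so
`β(q) α - α(q) β` is a nonzero form, which need only not vanish at `p` (`exists_generic_line`).

The restrictions `A, B, C` of `G₁, G₂, G₃` therefore satisfy `A ^ e₁ + B ^ e₂ = C ^ e₃` with
`A`, `B` coprime, and the Mason–Stothers theorem gives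
`d + 1 ≤ deg rad (A ^ e₁ B ^ e₂ C ^ e₃) ≤ deg A + deg B + deg C ≤ d / e₁ + d / e₂ + d / e₃`,
which is the assertion after division by `d` (`mason_powers`).
-/

open Finset

/-- A homogeneous polynomial in ℂ[x,y,z] is completely reducible if it is a product
of (nonzero) linear forms, i.e. of nonzero homogeneous polynomials of degree 1. -/
def CompletelyReducible (G : MvPolynomial (Fin 3) ℂ) : Prop :=
  ∃ s : Multiset (MvPolynomial (Fin 3) ℂ),
    (∀ f ∈ s, MvPolynomial.IsHomogeneous f 1 ∧ f ≠ 0) ∧ G = s.prod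

/-- The restriction of a polynomial to the affine line `t ↦ p + t q`. -/
noncomputable def lineRestrict (p q : Fin 3 → ℂ) :
    MvPolynomial (Fin 3) ℂ →ₐ[ℂ] Polynomial ℂ :=
  MvPolynomial.aeval fun i => Polynomial.C (p i) + Polynomial.C (q i) * Polynomial.X

lemma lineRestrict_linear (p q : Fin 3 → ℂ) {f : MvPolynomial (Fin 3) ℂ}
    (hf : f.IsHomogeneous 1) :
    lineRestrict p q f = Polynomial.C (MvPolynomial.eval p f)
      + Polynomial.C (MvPolynomial.eval q f) * Polynomial.X := by
  have hf' : f ∈ MvPolynomial.homogeneousSubmodule (Fin 3) ℂ 1 := hf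
  rw [MvPolynomial.homogeneousSubmodule_one_eq_span_X] at hf'
  induction hf' using Submodule.span_induction with
  | mem x hx =>
    obtain ⟨i, rfl⟩ := hx
    simp [lineRestrict]
  | zero => simp
  | add x y hx hy ihx ihy =>
    rw [← MvPolynomial.homogeneousSubmodule_one_eq_span_X] at hx hy
    rw [map_add, ihx hx, ihy hy]
    simp only [map_add]
    ring
  | smul c x hx ih =>
    rw [← MvPolynomial.homogeneousSubmodule_one_eq_span_X] at hx
    rw [map_smul, ih hx]
    simp only [MvPolynomial.smul_eval, Polynomial.smul_eq_C_mul, map_mul]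
    ring

lemma exists_eval_ne_zero {f : MvPolynomial (Fin 3) ℂ} (hf : f ≠ 0) :
    ∃ x, MvPolynomial.eval x f ≠ 0 := by
  by_contra! h
  exact hf (MvPolynomial.funext fun x => by simpa using h x)

lemma not_isUnit_of_linear {f : MvPolynomial (Fin 3) ℂ} (hf : f.IsHomogeneous 1) :
    ¬ IsUnit f := by
  intro hu
  have h0 : MvPolynomial.eval (0 : Fin 3 → ℂ) f = 0 := by
    rw [MvPolynomial.eval_zero, MvPolynomial.constantCoeff_eq]
    exact hf.coeff_eq_zero (by simp)
  have := hu.map (MvPolynomial.eval (0 : Fin 3 → ℂ))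
  exact this.ne_zero h0

lemma isHomogeneous_multiset_prod (s : Multiset (MvPolynomial (Fin 3) ℂ))
    (hs : ∀ f ∈ s, f.IsHomogeneous 1) : s.prod.IsHomogeneous (Multiset.card s) := by
  induction s using Multiset.induction_on with
  | empty => simpa using MvPolynomial.isHomogeneous_one (Fin 3) ℂ
  | cons a s ih =>
    rw [Multiset.prod_cons, Multiset.card_cons, add_comm]
    exact (hs a (by simp)).mul (ih fun f hf => hs f (by simp [hf]))

lemma natDegree_lineRestrict_prod (p q : Fin 3 → ℂ) (s : Multiset (MvPolynomial (Fin 3) ℂ))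
    (hs : ∀ f ∈ s, f.IsHomogeneous 1 ∧ MvPolynomial.eval q f ≠ 0) :
    lineRestrict p q s.prod ≠ 0 ∧
      (lineRestrict p q s.prod).natDegree = Multiset.card s := by
  induction s using Multiset.induction_on with
  | empty => simp
  | cons a s ih =>
    obtain ⟨h0, h1⟩ := ih fun f hf => hs f (by simp [hf])
    obtain ⟨ha, haq⟩ := hs a (by simp)
    have hd : (lineRestrict p q a).natDegree = 1 := by
      rw [lineRestrict_linear p q ha, add_comm]
      exact Polynomial.natDegree_linear haq
    have hne : lineRestrict p q a ≠ 0 := by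
      intro h
      simp [h] at hd
    rw [Multiset.prod_cons, map_mul]
    refine ⟨mul_ne_zero hne h0, ?_⟩
    rw [Polynomial.natDegree_mul hne h0, hd, h1, Multiset.card_cons, add_comm]

lemma isCoprime_multiset_prod {R : Type*} [CommSemiring R] (s t : Multiset R)
    (h : ∀ a ∈ s, ∀ b ∈ t, IsCoprime a b) : IsCoprime s.prod t.prod := by
  have right : ∀ (a : R) (t : Multiset R), (∀ b ∈ t, IsCoprime a b) → IsCoprime a t.prod := by
    intro a t
    induction t using Multiset.induction_on with
    | empty => intro _; simpa using isCoprime_one_right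
    | cons b t ih =>
      intro h
      rw [Multiset.prod_cons]
      exact (h b (by simp)).mul_right (ih fun c hc => h c (by simp [hc]))
  exact (right _ s fun a ha => (right a t (h a ha)).symm).symm

/-- Two linear polynomials whose coefficient matrix has nonzero determinant generate the
unit ideal. -/
lemma isCoprime_of_det_ne_zero {a b c d : ℂ} (h : d * a - b * c ≠ 0) :
    IsCoprime (Polynomial.C a + Polynomial.C b * Polynomial.X)
      (Polynomial.C c + Polynomial.C d * Polynomial.X) := by
  refine ⟨Polynomial.C ((d * a - b * c)⁻¹ * d), Polynomial.C (-((d * a - b * c)⁻¹ * b)), ?_⟩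
  have key : (Polynomial.C ((d * a - b * c)⁻¹ * (d * a - b * c)) : Polynomial ℂ) = 1 := by
    rw [inv_mul_cancel₀ h, Polynomial.C_1]
  rw [← key]
  simp only [Polynomial.C_mul, Polynomial.C_sub, Polynomial.C_neg]
  ring

/-- A line along which no linear factor loses its degree and no factor of the first product
acquires a common root with a factor of the second. -/
lemma exists_generic_line (s t : Multiset (MvPolynomial (Fin 3) ℂ))
    (hs : ∀ f ∈ s, f.IsHomogeneous 1 ∧ f ≠ 0) (ht : ∀ f ∈ t, f.IsHomogeneous 1 ∧ f ≠ 0)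
    (hcop : ∀ r, r ∣ s.prod → r ∣ t.prod → IsUnit r) :
    ∃ p q : Fin 3 → ℂ,
      (∀ f ∈ s, MvPolynomial.eval q f ≠ 0) ∧ (∀ f ∈ t, MvPolynomial.eval q f ≠ 0) ∧
      IsCoprime (lineRestrict p q s.prod) (lineRestrict p q t.prod) := by
  have hst : (s + t).prod ≠ 0 := by
    refine Multiset.prod_ne_zero fun h => ?_
    rcases Multiset.mem_add.1 h with h | h
    · exact (hs _ h).2 rfl
    · exact (ht _ h).2 rfl
  obtain ⟨q, hq⟩ := exists_eval_ne_zero hst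
  have hqst : ∀ f ∈ s + t, MvPolynomial.eval q f ≠ 0 := by
    intro f hf h0
    obtain ⟨g, hg⟩ := Multiset.dvd_prod hf
    rw [hg, map_mul, h0, zero_mul] at hq
    exact hq rfl
  have hqs : ∀ f ∈ s, MvPolynomial.eval q f ≠ 0 := fun f hf => hqst f (by simp [hf])
  have hqt : ∀ f ∈ t, MvPolynomial.eval q f ≠ 0 := fun f hf => hqst f (by simp [hf])
  -- The 2 × 2 minors whose vanishing at `p` would make `f` and `g` meet on the line.
  let minor : MvPolynomial (Fin 3) ℂ × MvPolynomial (Fin 3) ℂ → MvPolynomial (Fin 3) ℂ :=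
    fun w => MvPolynomial.C (MvPolynomial.eval q w.2) * w.1
      - MvPolynomial.C (MvPolynomial.eval q w.1) * w.2
  have hminor : ((s ×ˢ t).map minor).prod ≠ 0 := by
    refine Multiset.prod_ne_zero fun h => ?_
    obtain ⟨⟨f, g⟩, hfg, h0⟩ := Multiset.mem_map.1 h
    obtain ⟨hf, hg⟩ := Multiset.mem_product.1 hfg
    have h1 : MvPolynomial.C (MvPolynomial.eval q g) * f
        = MvPolynomial.C (MvPolynomial.eval q f) * g := sub_eq_zero.1 h0
    have hunit : IsUnit (MvPolynomial.C (σ := Fin 3) (MvPolynomial.eval q g)) :=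
      (IsUnit.mk0 _ (hqt g hg)).map MvPolynomial.C
    have hdvd : g ∣ f := (hunit.dvd_mul_left).1 (h1 ▸ dvd_mul_left _ _)
    exact not_isUnit_of_linear (ht g hg).1
      (hcop g (hdvd.trans (Multiset.dvd_prod hf)) (Multiset.dvd_prod hg))
  obtain ⟨p, hp⟩ := exists_eval_ne_zero hminor
  refine ⟨p, q, hqs, hqt, ?_⟩
  rw [map_multiset_prod, map_multiset_prod]
  refine isCoprime_multiset_prod _ _ fun a ha b hb => ?_
  obtain ⟨f, hf, rfl⟩ := Multiset.mem_map.1 ha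
  obtain ⟨g, hg, rfl⟩ := Multiset.mem_map.1 hb
  rw [lineRestrict_linear p q (hs f hf).1, lineRestrict_linear p q (ht g hg).1]
  refine isCoprime_of_det_ne_zero fun h0 => hp ?_
  have hmem : minor (f, g) ∈ (s ×ˢ t).map minor :=
    Multiset.mem_map_of_mem _ (Multiset.mem_product.2 ⟨hf, hg⟩)
  obtain ⟨r, hr⟩ := Multiset.dvd_prod hmem
  rw [hr, map_mul]
  have : MvPolynomial.eval p (minor (f, g)) = 0 := by
    simpa [minor] using h0
  rw [this, zero_mul]

open UniqueFactorizationMonoid in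
/-- Mason–Stothers for a coprime identity between powers, with `radical (A ^ e)` bounded
by `A` itself. -/
lemma mason_powers {A B C : Polynomial ℂ} {e₁ e₂ e₃ d : ℕ} (he₁ : e₁ ≠ 0) (he₂ : e₂ ≠ 0)
    (he₃ : e₃ ≠ 0) (hd : d ≠ 0) (hA : (A ^ e₁).natDegree = d) (hAB : IsCoprime A B)
    (hB : B ≠ 0) (heq : A ^ e₁ + B ^ e₂ = C ^ e₃) :
    d + 1 ≤ A.natDegree + B.natDegree + C.natDegree := by
  have hA0 : A ≠ 0 := by
    rintro rfl
    simp [he₁] at hA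
    exact hd hA.symm
  have hcop : IsCoprime (A ^ e₁) (B ^ e₂) := hAB.pow
  have hC : C ≠ 0 := by
    rintro rfl
    rw [zero_pow he₃] at heq
    have hdvd : A ^ e₁ ∣ B ^ e₂ := by
      rw [eq_neg_of_add_eq_zero_right heq]
      exact (dvd_refl _).neg_right
    exact hd (hA ▸ Polynomial.natDegree_eq_zero_of_isUnit
      (hcop.isUnit_of_dvd' dvd_rfl hdvd))
  have hdeg : (radical (A ^ e₁ * B ^ e₂ * -(C ^ e₃))).natDegree
      ≤ A.natDegree + B.natDegree + C.natDegree := by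
    have hdvd : radical (A ^ e₁ * B ^ e₂ * -(C ^ e₃)) ∣ A * B * C := by
      refine radical_mul_dvd.trans (mul_dvd_mul (radical_mul_dvd.trans (mul_dvd_mul ?_ ?_)) ?_)
      · rw [radical_pow A he₁]; exact radical_dvd_self
      · rw [radical_pow B he₂]; exact radical_dvd_self
      · rw [UniqueFactorizationDomain.radical_neg, radical_pow C he₃]; exact radical_dvd_self
    have hABC := mul_ne_zero (mul_ne_zero hA0 hB) hC
    refine (Polynomial.natDegree_le_of_dvd hdvd hABC).trans ?_
    rw [Polynomial.natDegree_mul (mul_ne_zero hA0 hB) hC, Polynomial.natDegree_mul hA0 hB]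
  rcases Polynomial.abc (pow_ne_zero e₁ hA0) (pow_ne_zero e₂ hB)
    (neg_ne_zero.2 (pow_ne_zero e₃ hC)) hcop (by rw [heq, add_neg_cancel]) with h | h
  · rw [← hA]
    exact h.1.trans hdeg
  · exact absurd (hA ▸ Polynomial.derivative_eq_zero.1 h.1) hd

/-- Halphen-type inequality: if G₁, G₂, G₃ are products of linear
forms in ℂ[x,y,z], the powers G₁^{e₁}, G₂^{e₂}, G₃^{e₃} are homogeneous of the same
degree d ≥ 1 with G₁^{e₁} + G₂^{e₂} = G₃^{e₃}, and G₁, G₂ have no non-constant common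
factor, then 1/e₁ + 1/e₂ + 1/e₃ > 1. -/
theorem halphen_inequality
    (G₁ G₂ G₃ : MvPolynomial (Fin 3) ℂ)
    (e₁ e₂ e₃ : ℕ) (he₁ : 0 < e₁) (he₂ : 0 < e₂) (he₃ : 0 < e₃)
    (hG₁ : CompletelyReducible G₁) (hG₂ : CompletelyReducible G₂)
    (hG₃ : CompletelyReducible G₃)
    (d : ℕ) (hd : 1 ≤ d)
    (hdeg₁ : MvPolynomial.IsHomogeneous (G₁ ^ e₁) d)
    (hdeg₂ : MvPolynomial.IsHomogeneous (G₂ ^ e₂) d)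
    (hdeg₃ : MvPolynomial.IsHomogeneous (G₃ ^ e₃) d)
    (heq : G₁ ^ e₁ + G₂ ^ e₂ = G₃ ^ e₃)
    (hcop : ∀ q : MvPolynomial (Fin 3) ℂ, q ∣ G₁ → q ∣ G₂ → IsUnit q) :
    (1 : ℚ) / e₁ + (1 : ℚ) / e₂ + (1 : ℚ) / e₃ > 1 := by
  obtain ⟨s, hs, rfl⟩ := hG₁
  obtain ⟨t, ht, rfl⟩ := hG₂
  obtain ⟨p, q, hqs, hqt, hco⟩ := exists_generic_line s t hs ht hcop
  obtain ⟨hA0, hAd⟩ := natDegree_lineRestrict_prod p q s fun f hf => ⟨(hs f hf).1, hqs f hf⟩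
  obtain ⟨hB0, hBd⟩ := natDegree_lineRestrict_prod p q t fun f hf => ⟨(ht f hf).1, hqt f hf⟩
  have hs_deg : Multiset.card s * e₁ = d :=
    ((isHomogeneous_multiset_prod s fun f hf => (hs f hf).1).pow e₁).inj_right hdeg₁
      (pow_ne_zero _ (Multiset.prod_ne_zero fun h => (hs _ h).2 rfl))
  have ht_deg : Multiset.card t * e₂ = d :=
    ((isHomogeneous_multiset_prod t fun f hf => (ht f hf).1).pow e₂).inj_right hdeg₂
      (pow_ne_zero _ (Multiset.prod_ne_zero fun h => (ht _ h).2 rfl))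
  have heq' := congrArg (lineRestrict p q) heq
  rw [map_add, map_pow, map_pow, map_pow] at heq'
  have hA_deg : (lineRestrict p q s.prod ^ e₁).natDegree = d := by
    rw [Polynomial.natDegree_pow, hAd, mul_comm, hs_deg]
  have hB_deg : (lineRestrict p q t.prod ^ e₂).natDegree = d := by
    rw [Polynomial.natDegree_pow, hBd, mul_comm, ht_deg]
  have hC_deg : e₃ * (lineRestrict p q G₃).natDegree ≤ d := by
    rw [← Polynomial.natDegree_pow, ← heq']
    exact (Polynomial.natDegree_add_le _ _).trans (by rw [hA_deg, hB_deg, max_self])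
  have key := mason_powers he₁.ne' he₂.ne' he₃.ne' (by omega) hA_deg hco hB0 heq'
  rw [hAd, hBd] at key
  have hd' : (0 : ℚ) < d := by exact_mod_cast hd
  have h₁ : (0 : ℚ) < e₁ := by exact_mod_cast he₁
  have h₂ : (0 : ℚ) < e₂ := by exact_mod_cast he₂
  have h₃ : (0 : ℚ) < e₃ := by exact_mod_cast he₃
  have k₁ : (Multiset.card s : ℚ) = d * (1 / e₁) := by
    rw [mul_one_div, eq_div_iff h₁.ne']
    exact_mod_cast hs_deg
  have k₂ : (Multiset.card t : ℚ) = d * (1 / e₂) := by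
    rw [mul_one_div, eq_div_iff h₂.ne']
    exact_mod_cast ht_deg
  have k₃ : ((lineRestrict p q G₃).natDegree : ℚ) ≤ d * (1 / e₃) := by
    rw [mul_one_div, le_div_iff₀ h₃, mul_comm]
    exact_mod_cast hC_deg
  have key' : (d : ℚ) + 1 ≤ Multiset.card s + Multiset.card t
      + (lineRestrict p q G₃).natDegree := by exact_mod_cast key
  have hfin : (d : ℚ) * 1 < d * (1 / e₁ + 1 / e₂ + 1 / e₃) := by
    rw [mul_add, mul_add]
    linarith
  exact lt_of_mul_lt_mul_left hfin hd'.le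
end

section
/- (Riemann–Hurwitz count for pencils of binary forms.) Let C₁, C₂ ∈ ℂ[x,y] be coprime homogeneous polynomials of the same degree n ≥ 1. For each point [a:b] of the projective line ℙ¹(ℂ), the homogeneous polynomial F_{[a:b]} = a·C₁ + b·C₂ is nonzero (well-defined up to a nonzero scalar), and its zero set in ℙ¹(ℂ) (i.e., the set of 1-dimensional subspaces of ℂ² on which it vanishes) is finite of cardinality z([a:b]) ≤ n. Moreover z([a:b]) = n for all but finitely many [a:b] ∈ ℙ¹(ℂ), and ∑_{[a:b] ∈ ℙ¹(ℂ)} (n − z([a:b])) = 2n − 2. -/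
/-!
In the affine coordinate `x` of `ℙ¹`, the pencil becomes the pencil of univariate polynomials
spanned by `f₁ = C₁(x, 1)` and `f₂ = C₂(x, 1)`, of degree at most `n`; a form vanishes at infinity
exactly when the degree of its dehomogenization drops below `n`. Coprimality of `C₁` and `C₂` means
that the pencil has no base point, affine or infinite (`no_common_zero`), so each point of `ℙ¹` is
a zero of exactly one member `[a : b]`.

The ramification is measured by the Wronskian `W` of `f₁` and `f₂`, which changes only by a nonzero
scalar under a change of basis of the pencil. If `f` is the member vanishing at an affine point `p`,
then `W` vanishes at `p` to order one less than `f` (`rootMultiplicity_wronskian`). Hence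
`∑ (n - z)` is `deg W` plus the contribution of infinity. If the member vanishing at infinity has
degree `d < n`, that contribution is `n - d - 1`, while `deg W = n + d - 1`
(`natDegree_wronskian_of_lt`), and the total is `2n - 2`.
-/

open Finset

/-- The number of points of ℙ¹(ℂ) (1-dimensional subspaces of ℂ², i.e.
Projectivization ℂ (Fin 2 → ℂ)) at which the binary form a·C₁ + b·C₂ vanishes, where
[a:b] is the projective point t (with representative t.rep). Since the forms are
homogeneous, vanishing at the chosen representative q.rep of a point q is equivalent
to vanishing on the whole corresponding line in ℂ². -/
noncomputable def pencilZeroCount (C₁ C₂ : MvPolynomial (Fin 2) ℂ)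
    (t : Projectivization ℂ (Fin 2 → ℂ)) : ℕ :=
  Nat.card {q : Projectivization ℂ (Fin 2 → ℂ) |
    MvPolynomial.eval q.rep (t.rep 0 • C₁ + t.rep 1 • C₂) = 0}

/-! ### Root multiplicities and Wronskians of univariate polynomials -/

section Univariate

open Polynomial

/-- If `f` vanishes at `p` and `k` does not, the Wronskian of `f` and `k` vanishes at `p` to order
exactly one less than `f` does. -/
lemma rootMultiplicity_wronskian {f k : ℂ[X]} {p : ℂ} (hf : f ≠ 0) (hfp : f.eval p = 0)
    (hkp : k.eval p ≠ 0) :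
    (wronskian f k).rootMultiplicity p + 1 = f.rootMultiplicity p := by
  obtain ⟨u, hu, hndvd⟩ := exists_eq_pow_rootMultiplicity_mul_and_not_dvd f hf p
  have hpos : 0 < f.rootMultiplicity p := (rootMultiplicity_pos hf).2 hfp
  obtain ⟨m, hm⟩ : ∃ m, f.rootMultiplicity p = m + 1 := ⟨_, (Nat.succ_pred_eq_of_pos hpos).symm⟩
  rw [hm] at hu ⊢
  have hup : u.eval p ≠ 0 := fun h => hndvd (dvd_iff_isRoot.2 h)
  set g : ℂ[X] := (X - C p) * u * derivative k
    - (((m : ℂ[X]) + 1) * u + (X - C p) * derivative u) * k with hg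
  have hW : wronskian f k = g * (X - C p) ^ m := by
    rw [wronskian, hu, hg]
    simp only [derivative_mul, derivative_X_sub_C_pow]
    simp only [Nat.cast_add, Nat.cast_one, Nat.add_sub_cancel, map_add, map_natCast, map_one]
    ring
  have hgp : g.eval p ≠ 0 := by
    have : g.eval p = -(((m : ℂ) + 1) * u.eval p * k.eval p) := by simp [hg]
    rw [this]
    exact neg_ne_zero.2 (mul_ne_zero (mul_ne_zero (Nat.cast_add_one_ne_zero m) hup) hkp)
  have hg0 : g ≠ 0 := by rintro h; simp [h] at hgp
  rw [hW, rootMultiplicity_mul_X_sub_C_pow hg0, rootMultiplicity_eq_zero hgp, zero_add]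

lemma wronskian_pencil (f₁ f₂ : ℂ[X]) (a b c d : ℂ) :
    wronskian (a • f₁ + b • f₂) (c • f₁ + d • f₂) = (a * d - b * c) • wronskian f₁ f₂ := by
  simp only [wronskian, derivative_add, smul_eq_C_mul, derivative_C_mul, C_sub, C_mul]
  ring

/-- The Wronskian of polynomials of distinct degrees `d < n` has degree `n + d - 1`, since the
leading terms do not cancel. -/
lemma natDegree_wronskian_of_lt {g h : ℂ[X]} {n : ℕ} (hg : g ≠ 0) (hgn : g.natDegree < n)
    (hh : h.natDegree ≤ n) (hhn : h.coeff n ≠ 0) :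
    wronskian g h ≠ 0 ∧ (wronskian g h).natDegree + 1 = n + g.natDegree := by
  obtain ⟨m, rfl⟩ : ∃ m, n = m + 1 := ⟨n - 1, by omega⟩
  have hle' : (derivative h).natDegree ≤ m := (natDegree_derivative_le h).trans (by omega)
  have hc1 : (g * derivative h).coeff (g.natDegree + m)
      = g.leadingCoeff * (h.coeff (m + 1) * (m + 1)) := by
    rw [coeff_mul_add_eq_of_natDegree_le le_rfl hle', coeff_derivative, leadingCoeff]
  have hd1 : (g * derivative h).natDegree ≤ g.natDegree + m :=
    natDegree_mul_le_of_le le_rfl hle'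
  have hc2 : (derivative g * h).coeff (g.natDegree + m)
      = g.leadingCoeff * (h.coeff (m + 1) * g.natDegree) := by
    rcases Nat.eq_zero_or_pos g.natDegree with h0 | h0
    · rw [derivative_of_natDegree_zero h0, h0]; simp
    · obtain ⟨e, he⟩ : ∃ e, g.natDegree = e + 1 := ⟨g.natDegree - 1, by omega⟩
      have hle'' : (derivative g).natDegree ≤ e := (natDegree_derivative_le g).trans (by omega)
      rw [leadingCoeff, he, show e + 1 + m = e + (m + 1) by ring,
        coeff_mul_add_eq_of_natDegree_le hle'' hh, coeff_derivative]
      push_cast; ring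
  have hd2 : (derivative g * h).natDegree ≤ g.natDegree + m := by
    rcases Nat.eq_zero_or_pos g.natDegree with h0 | h0
    · rw [derivative_of_natDegree_zero h0]; simp
    · exact (natDegree_mul_le_of_le (natDegree_derivative_le g) hh).trans (by omega)
  have hdeg : (wronskian g h).natDegree ≤ g.natDegree + m :=
    (natDegree_sub_le_of_le hd1 hd2).trans (by simp)
  have hc : (wronskian g h).coeff (g.natDegree + m) ≠ 0 := by
    rw [wronskian, coeff_sub, hc1, hc2, ← mul_sub, ← mul_sub]
    refine mul_ne_zero (leadingCoeff_ne_zero.2 hg) (mul_ne_zero hhn (sub_ne_zero.2 ?_))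
    exact_mod_cast hgn.ne'
  refine ⟨by rintro h0; simp [h0] at hc, ?_⟩
  rw [natDegree_eq_of_le_of_coeff_ne_zero hdeg hc]
  omega

/-- Over `ℂ` the degree is the sum of the root multiplicities, over any finite set of points
containing the roots. -/
lemma sum_rootMultiplicity {f : ℂ[X]} {s : Finset ℂ}
    (hs : f.roots.toFinset ⊆ s) : ∑ p ∈ s, f.rootMultiplicity p = f.natDegree := by
  classical
  rw [← (IsAlgClosed.splits f).natDegree_eq_card_roots.symm]
  simp_rw [← count_roots]
  exact Multiset.sum_count_eq_card fun p hp => hs (Multiset.mem_toFinset.2 hp)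

end Univariate

/-! ### Binary forms and their dehomogenizations -/

section Forms

open MvPolynomial

lemma aeval_mul_of_isHomogeneous {A : Type*} [CommRing A] [Algebra ℂ A]
    {F : MvPolynomial (Fin 2) ℂ} {n : ℕ} (hF : F.IsHomogeneous n) (s : A) (x : Fin 2 → A) :
    aeval (fun i => s * x i) F = s ^ n * aeval x F := by
  rw [aeval_def, aeval_def, eval₂_eq', eval₂_eq', Finset.mul_sum]
  refine Finset.sum_congr rfl fun d hd => ?_
  have hw : d 0 + d 1 = n := by
    have := hF (mem_support_iff.1 hd)
    simpa [Finsupp.weight_apply, Finsupp.sum_fintype] using this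
  simp only [Fin.prod_univ_two, mul_pow, ← hw, pow_add]
  ring

/-- A form vanishing at `v ≠ 0` is divisible by the linear form `v₁ x - v₀ y`: modulo that linear
form, `(x, y)` is a multiple of `v`. -/
lemma linear_dvd_of_eval_eq_zero {F : MvPolynomial (Fin 2) ℂ} {n : ℕ} (hF : F.IsHomogeneous n)
    {v : Fin 2 → ℂ} (hv : v ≠ 0) (h : eval v F = 0) :
    C (v 1) * X 0 - C (v 0) * X 1 ∣ F := by
  set l : MvPolynomial (Fin 2) ℂ := C (v 1) * X 0 - C (v 0) * X 1 with hl
  rw [← Ideal.mem_span_singleton, ← Ideal.Quotient.eq_zero_iff_mem]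
  set π := Ideal.Quotient.mkₐ ℂ (Ideal.span {l}) with hπ
  change π F = 0
  have hrel : algebraMap ℂ _ (v 1) * π (X 0) = algebraMap ℂ _ (v 0) * π (X 1) := by
    have : π l = 0 := Ideal.Quotient.eq_zero_iff_mem.2 (Ideal.mem_span_singleton_self l)
    have h2 : π l = π (algebraMap ℂ _ (v 1)) * π (X 0) - π (algebraMap ℂ _ (v 0)) * π (X 1) := by
      rw [← map_mul, ← map_mul, ← map_sub]
      rfl
    rw [h2, sub_eq_zero] at this
    simpa only [AlgHom.commutes] using this
  obtain ⟨s, hs⟩ : ∃ s, ∀ i, π (X i) = s * algebraMap ℂ _ (v i) := by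
    have hinv : ∀ i, v i ≠ 0 →
        algebraMap ℂ (MvPolynomial (Fin 2) ℂ ⧸ Ideal.span {l}) (v i)⁻¹ * algebraMap ℂ _ (v i) = 1 :=
      fun i hi => by rw [← map_mul, inv_mul_cancel₀ hi, map_one]
    by_cases h0 : v 0 = 0
    · have h1 : v 1 ≠ 0 := fun h1 => hv (by ext i; fin_cases i <;> simp [h0, h1])
      refine ⟨algebraMap ℂ _ (v 1)⁻¹ * π (X 1), Fin.forall_fin_two.2 ⟨?_, ?_⟩⟩
      · linear_combination algebraMap ℂ _ (v 1)⁻¹ * hrel - π (X 0) * hinv 1 h1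
      · linear_combination - π (X 1) * hinv 1 h1
    · refine ⟨algebraMap ℂ _ (v 0)⁻¹ * π (X 0), Fin.forall_fin_two.2 ⟨?_, ?_⟩⟩
      · linear_combination - π (X 0) * hinv 0 h0
      · linear_combination - algebraMap ℂ _ (v 0)⁻¹ * hrel - π (X 1) * hinv 0 h0
  have : π F = aeval (fun i => s * algebraMap ℂ _ (v i)) F := by
    rw [← funext hs]
    exact DFunLike.congr_fun (aeval_unique π) F
  rw [this, aeval_mul_of_isHomogeneous hF]
  have h2 : aeval (fun i => algebraMap ℂ (MvPolynomial (Fin 2) ℂ ⧸ Ideal.span {l}) (v i)) F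
      = algebraMap ℂ _ (eval v F) := aeval_algebraMap_apply _ v F
  rw [h2, h, map_zero, mul_zero]

lemma no_common_zero {C₁ C₂ : MvPolynomial (Fin 2) ℂ} {n : ℕ}
    (h₁ : C₁.IsHomogeneous n) (h₂ : C₂.IsHomogeneous n)
    (hcop : ∀ q : MvPolynomial (Fin 2) ℂ, q ∣ C₁ → q ∣ C₂ → IsUnit q)
    {v : Fin 2 → ℂ} (hv : v ≠ 0) (e₁ : eval v C₁ = 0) (e₂ : eval v C₂ = 0) : False := by
  have hu := hcop _ (linear_dvd_of_eval_eq_zero h₁ hv e₁) (linear_dvd_of_eval_eq_zero h₂ hv e₂)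
  have := hu.map (eval v)
  simp [mul_comm] at this

/-- The dehomogenization `F(x, 1)` of a binary form. -/
noncomputable def dehom : MvPolynomial (Fin 2) ℂ →ₐ[ℂ] Polynomial ℂ :=
  aeval ![Polynomial.X, 1]

lemma eval_dehom (F : MvPolynomial (Fin 2) ℂ) (p : ℂ) :
    (dehom F).eval p = eval ![p, 1] F := by
  have h : ((Polynomial.aeval p).comp dehom : MvPolynomial (Fin 2) ℂ →ₐ[ℂ] ℂ) = aeval ![p, 1] := by
    ext i; fin_cases i <;> simp [dehom]
  have := DFunLike.congr_fun h F
  simpa [Polynomial.coe_aeval_eq_eval, aeval_eq_eval] using this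

lemma dehom_eq_sum {F : MvPolynomial (Fin 2) ℂ} :
    dehom F = ∑ d ∈ F.support, Polynomial.C (F.coeff d) * Polynomial.X ^ d 0 := by
  rw [dehom, aeval_def, eval₂_eq']
  simp [Fin.prod_univ_two]

lemma natDegree_dehom_le {F : MvPolynomial (Fin 2) ℂ} {n : ℕ} (hF : F.IsHomogeneous n) :
    (dehom F).natDegree ≤ n := by
  rw [dehom_eq_sum]
  refine Polynomial.natDegree_sum_le_of_forall_le _ _ fun d hd => ?_
  have hw : d 0 + d 1 = n := by
    have := hF (mem_support_iff.1 hd)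
    simpa [Finsupp.weight_apply, Finsupp.sum_fintype] using this
  exact (Polynomial.natDegree_C_mul_X_pow_le _ _).trans (by omega)

/-- The coefficient of `x ^ n` is the value at the point at infinity. -/
lemma coeff_dehom {F : MvPolynomial (Fin 2) ℂ} {n : ℕ} (hF : F.IsHomogeneous n) :
    (dehom F).coeff n = eval ![1, 0] F := by
  rw [dehom_eq_sum, eval_eq', Polynomial.finsetSum_coeff]
  refine Finset.sum_congr rfl fun d hd => ?_
  have hw : d 0 + d 1 = n := by
    have := hF (mem_support_iff.1 hd)
    simpa [Finsupp.weight_apply, Finsupp.sum_fintype] using this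
  rw [Polynomial.coeff_C_mul_X_pow]
  by_cases h : d 1 = 0
  · have : n = d 0 := by omega
    simp [Fin.prod_univ_two, h, this]
  · have : n ≠ d 0 := by omega
    simp [Fin.prod_univ_two, h, this]

end Forms

/-! ### Zeros of binary forms on the projective line -/

section Zeros

open MvPolynomial

/-- The affine point `[p : 1]`. -/
noncomputable def affPt (p : ℂ) : Projectivization ℂ (Fin 2 → ℂ) :=
  Projectivization.mk ℂ ![p, 1] (fun h => by simpa using congrFun h 1)

/-- The point at infinity `[1 : 0]`. -/
noncomputable def infPt : Projectivization ℂ (Fin 2 → ℂ) :=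
  Projectivization.mk ℂ ![1, 0] (fun h => by simpa using congrFun h 0)

lemma affPt_injective : Function.Injective affPt := by
  intro p q h
  obtain ⟨a, ha⟩ := (Projectivization.mk_eq_mk_iff' ..).1 h
  have h0 := congrFun ha 0
  have h1 := congrFun ha 1
  simp at h0 h1
  simpa [h1] using h0.symm

lemma affPt_ne_infPt (p : ℂ) : affPt p ≠ infPt := by
  intro h
  obtain ⟨a, ha⟩ := (Projectivization.mk_eq_mk_iff' ..).1 h
  simpa using congrFun ha 1

lemma eq_affPt_or_eq_infPt (q : Projectivization ℂ (Fin 2 → ℂ)) :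
    (∃ p, q = affPt p) ∨ q = infPt := by
  induction q using Projectivization.ind with
  | h v hv =>
    by_cases h1 : v 1 = 0
    · right
      refine (Projectivization.mk_eq_mk_iff' ..).2 ⟨v 0, ?_⟩
      ext i; fin_cases i <;> simp [h1]
    · left
      refine ⟨v 0 / v 1, (Projectivization.mk_eq_mk_iff' ..).2 ⟨v 1, ?_⟩⟩
      ext i; fin_cases i <;> simp [h1, mul_div_cancel₀]

lemma eval_rep_mk {F : MvPolynomial (Fin 2) ℂ} {n : ℕ} (hF : F.IsHomogeneous n)
    {v : Fin 2 → ℂ} (hv : v ≠ 0) :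
    eval (Projectivization.mk ℂ v hv).rep F = 0 ↔ eval v F = 0 := by
  obtain ⟨a, ha⟩ := Projectivization.exists_smul_eq_mk_rep ℂ v hv
  rw [← ha]
  have := aeval_mul_of_isHomogeneous hF (a : ℂ) v
  simp only [aeval_eq_eval] at this
  change eval (fun i => (a : ℂ) * v i) F = 0 ↔ _
  have h2 : eval (fun i => (a : ℂ) * v i) F = (a : ℂ) ^ n * eval v F := by simpa using this
  rw [h2]
  simp

open Classical in
/-- The zeros of a form are the roots of its dehomogenization, together with the point at infinity
when the degree drops. -/
lemma zeroSet_eq {F : MvPolynomial (Fin 2) ℂ} {n : ℕ} (hF : F.IsHomogeneous n)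
    (h0 : dehom F ≠ 0) :
    {q : Projectivization ℂ (Fin 2 → ℂ) | eval q.rep F = 0} =
      ((dehom F).roots.toFinset.image affPt ∪
        (if (dehom F).coeff n = 0 then {infPt} else ∅) : Finset _) := by
  ext q
  rcases eq_affPt_or_eq_infPt q with ⟨p, rfl⟩ | rfl
  · have hne : affPt p ∉ (if (dehom F).coeff n = 0 then {infPt} else ∅ : Finset _) := by
      split_ifs <;> simp [affPt_ne_infPt]
    have hmem : affPt p ∈ (dehom F).roots.toFinset.image affPt ↔ (dehom F).eval p = 0 := by
      rw [affPt_injective.mem_finset_image]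
      simp [h0]
    rw [Finset.mem_coe, Finset.mem_union, hmem, or_iff_left hne, eval_dehom]
    exact eval_rep_mk hF _
  · have hne : infPt ∉ (dehom F).roots.toFinset.image affPt := by
      simp only [Finset.mem_image, not_exists, not_and]
      exact fun p _ => affPt_ne_infPt p
    rw [Finset.mem_coe, Finset.mem_union, or_iff_right hne]
    have : eval infPt.rep F = 0 ↔ (dehom F).coeff n = 0 := by
      rw [coeff_dehom hF]
      exact eval_rep_mk hF _
    rw [Set.mem_ofPred_eq, this]
    split_ifs with h <;> simp [h]

open Classical in
lemma card_zeroSet {F : MvPolynomial (Fin 2) ℂ} {n : ℕ} (hF : F.IsHomogeneous n)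
    (h0 : dehom F ≠ 0) :
    Nat.card {q : Projectivization ℂ (Fin 2 → ℂ) | eval q.rep F = 0} =
      (dehom F).roots.toFinset.card + (if (dehom F).coeff n = 0 then 1 else 0) := by
  rw [zeroSet_eq hF h0, Nat.card_coe_set_eq, Set.ncard_coe_finset, Finset.card_union_of_disjoint,
    Finset.card_image_of_injective _ affPt_injective]
  · split_ifs <;> simp
  · split_ifs
    · simp only [Finset.disjoint_singleton_right, Finset.mem_image, not_exists, not_and]
      exact fun p _ => affPt_ne_infPt p
    · simp

/-- The point `[y : -x]` is the only `[a : b]` with `a x + b y = 0`. -/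
lemma rep_orthogonal_iff (t : Projectivization ℂ (Fin 2 → ℂ)) {x y : ℂ} (h : ![y, -x] ≠ 0) :
    t.rep 0 * x + t.rep 1 * y = 0 ↔ t = Projectivization.mk ℂ ![y, -x] h := by
  conv_rhs => rw [← t.mk_rep]
  rw [Projectivization.mk_eq_mk_iff']
  constructor
  · intro e
    by_cases hy : y = 0
    · have hx : x ≠ 0 := by rintro rfl; simp [hy] at h
      have h0 : t.rep 0 = 0 := by simpa [hy, hx] using e
      refine ⟨-(t.rep 1) / x, ?_⟩
      ext i; fin_cases i
      · simp [hy, h0]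
      · simp; field_simp
    · refine ⟨t.rep 0 / y, ?_⟩
      ext i; fin_cases i
      · simp; field_simp
      · simp; field_simp; linear_combination -e
  · rintro ⟨a, ha⟩
    have h0 := congrFun ha 0
    have h1 := congrFun ha 1
    simp at h0 h1
    rw [← h0, ← h1]; ring

end Zeros

/-! ### The count -/

section Pencil

open Polynomial

/-- A pencil member given by `v ≠ 0` completes to a basis of the pencil. -/
lemma exists_complement {v : Fin 2 → ℂ} (hv : v ≠ 0) :
    ∃ c d : ℂ, v 0 * d - v 1 * c ≠ 0 := by
  by_cases h0 : v 0 = 0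
  · have h1 : v 1 ≠ 0 := fun h1 => hv (by ext i; fin_cases i <;> simp [h0, h1])
    exact ⟨1, 0, by simp [h1]⟩
  · exact ⟨0, 1, by simp [h0]⟩

/-- If two linear functionals are independent, two numbers on which both vanish are zero. -/
lemma eq_zero_of_det_ne_zero {a b c d x y : ℂ} (hD : a * d - b * c ≠ 0)
    (h₁ : a * x + b * y = 0) (h₂ : c * x + d * y = 0) : x = 0 ∧ y = 0 := by
  constructor
  · exact (mul_eq_zero.1 (by linear_combination d * h₁ - b * h₂ :
      (a * d - b * c) * x = 0)).resolve_left hD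
  · exact (mul_eq_zero.1 (by linear_combination a * h₂ - c * h₁ :
      (a * d - b * c) * y = 0)).resolve_left hD

variable {n : ℕ} {f₁ f₂ : ℂ[X]}

/-- No member of the pencil is zero: otherwise another member, of degree `n ≥ 1`, would generate
the pencil and its roots would be base points. -/
lemma pencil_ne_zero (hn : 1 ≤ n)
    (hz : ∀ p, ¬ (f₁.eval p = 0 ∧ f₂.eval p = 0)) (hi : ¬ (f₁.coeff n = 0 ∧ f₂.coeff n = 0))
    {v : Fin 2 → ℂ} (hv : v ≠ 0) : v 0 • f₁ + v 1 • f₂ ≠ 0 := by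
  intro h
  obtain ⟨c, d, hD⟩ := exists_complement hv
  have hc : (c • f₁ + d • f₂).coeff n ≠ 0 := by
    intro h2
    refine hi (eq_zero_of_det_ne_zero hD ?_ (by simpa using h2))
    simpa using congrArg (fun f => f.coeff n) h
  have hdeg : (c • f₁ + d • f₂).degree ≠ 0 := by
    intro h2
    have := le_natDegree_of_ne_zero hc
    rw [natDegree_eq_of_degree_eq_some (n := 0) h2] at this
    omega
  obtain ⟨p, hp⟩ := IsAlgClosed.exists_root _ hdeg
  refine hz p (eq_zero_of_det_ne_zero hD ?_ (by simpa [IsRoot.def] using hp))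
  simpa using congrArg (fun f => f.eval p) h

/-- For a nonzero member `f` of a base-point-free pencil, the excess of its degree over its number
of roots is the number of zeros, with multiplicity, of the Wronskian of the pencil among the roots
of `f`. -/
lemma natDegree_eq_card_roots_add
    (hz : ∀ p, ¬ (f₁.eval p = 0 ∧ f₂.eval p = 0))
    {v : Fin 2 → ℂ} (hv : v ≠ 0) (h0 : v 0 • f₁ + v 1 • f₂ ≠ 0) :
    (v 0 • f₁ + v 1 • f₂).natDegree = (v 0 • f₁ + v 1 • f₂).roots.toFinset.card +
      ∑ p ∈ (v 0 • f₁ + v 1 • f₂).roots.toFinset, (wronskian f₁ f₂).rootMultiplicity p := by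
  obtain ⟨c, d, hD⟩ := exists_complement hv
  rw [← sum_rootMultiplicity (Finset.Subset.refl _), Finset.card_eq_sum_ones,
    ← Finset.sum_add_distrib]
  refine Finset.sum_congr rfl fun p hp => ?_
  have hp0 : (v 0 • f₁ + v 1 • f₂).eval p = 0 := by
    rw [Multiset.mem_toFinset, mem_roots h0] at hp
    exact hp
  have hk : (c • f₁ + d • f₂).eval p ≠ 0 := by
    intro h2
    exact hz p (eq_zero_of_det_ne_zero hD (by simpa using hp0) (by simpa using h2))
  rw [← rootMultiplicity_wronskian h0 hp0 hk, wronskian_pencil, ← count_roots,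
    roots_smul_nonzero _ hD, count_roots, add_comm]

/-- If the member of the pencil given by `v` has degree `< n`, then its degree determines that of
the Wronskian of the pencil. -/
lemma natDegree_wronskian_pencil
    (hd₁ : f₁.natDegree ≤ n) (hd₂ : f₂.natDegree ≤ n) (hi : ¬ (f₁.coeff n = 0 ∧ f₂.coeff n = 0))
    {v : Fin 2 → ℂ} (hv : v ≠ 0) (h0 : v 0 • f₁ + v 1 • f₂ ≠ 0)
    (hlt : (v 0 • f₁ + v 1 • f₂).natDegree < n) :
    wronskian f₁ f₂ ≠ 0 ∧
      (wronskian f₁ f₂).natDegree + 1 = n + (v 0 • f₁ + v 1 • f₂).natDegree := by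
  obtain ⟨c, d, hD⟩ := exists_complement hv
  have hk : (c • f₁ + d • f₂).coeff n ≠ 0 := by
    intro h2
    refine hi (eq_zero_of_det_ne_zero hD ?_ (by simpa using h2))
    simpa using coeff_eq_zero_of_natDegree_lt hlt
  have hkd : (c • f₁ + d • f₂).natDegree ≤ n :=
    natDegree_add_le_of_degree_le ((natDegree_smul_le _ _).trans hd₁)
      ((natDegree_smul_le _ _).trans hd₂)
  obtain ⟨hW, hWd⟩ := natDegree_wronskian_of_lt h0 hlt hkd hk
  rw [wronskian_pencil] at hW hWd
  rw [natDegree_smul _ hD] at hWd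
  exact ⟨fun h => hW (by simp [h]), hWd⟩

end Pencil

/-- Riemann–Hurwitz count for pencils of binary forms: Let C₁, C₂ be
coprime binary forms of the same degree n ≥ 1. Then for every [a:b] ∈ ℙ¹(ℂ) the form
F_{[a:b]} = a·C₁ + b·C₂ is nonzero, its zero set in ℙ¹(ℂ) is finite of cardinality
z([a:b]) ≤ n; moreover z([a:b]) = n for all but finitely many [a:b], and
∑_{[a:b]∈ℙ¹(ℂ)} (n − z([a:b])) = 2n − 2. -/
theorem pencil_binary_forms_riemann_hurwitz
    (n : ℕ) (hn : 1 ≤ n) (C₁ C₂ : MvPolynomial (Fin 2) ℂ)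
    (h₁ : MvPolynomial.IsHomogeneous C₁ n) (h₂ : MvPolynomial.IsHomogeneous C₂ n)
    (hcop : ∀ q : MvPolynomial (Fin 2) ℂ, q ∣ C₁ → q ∣ C₂ → IsUnit q) :
    (∀ t : Projectivization ℂ (Fin 2 → ℂ), t.rep 0 • C₁ + t.rep 1 • C₂ ≠ 0)
    ∧ (∀ t : Projectivization ℂ (Fin 2 → ℂ),
        {q : Projectivization ℂ (Fin 2 → ℂ) |
          MvPolynomial.eval q.rep (t.rep 0 • C₁ + t.rep 1 • C₂) = 0}.Finite
        ∧ pencilZeroCount C₁ C₂ t ≤ n)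
    ∧ {t : Projectivization ℂ (Fin 2 → ℂ) | pencilZeroCount C₁ C₂ t ≠ n}.Finite
    ∧ ∑ᶠ t : Projectivization ℂ (Fin 2 → ℂ), (n - pencilZeroCount C₁ C₂ t) = 2 * n - 2 := by
  classical
  set f₁ := dehom C₁ with hf₁
  set f₂ := dehom C₂ with hf₂
  have hd₁ : f₁.natDegree ≤ n := natDegree_dehom_le h₁
  have hd₂ : f₂.natDegree ≤ n := natDegree_dehom_le h₂
  have hz : ∀ p, ¬ (f₁.eval p = 0 ∧ f₂.eval p = 0) := fun p ⟨e₁, e₂⟩ =>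
    no_common_zero h₁ h₂ hcop (v := ![p, 1]) (fun h => by simpa using congrFun h 1)
      ((eval_dehom C₁ p).symm.trans e₁) ((eval_dehom C₂ p).symm.trans e₂)
  have hi : ¬ (f₁.coeff n = 0 ∧ f₂.coeff n = 0) := fun ⟨e₁, e₂⟩ =>
    no_common_zero h₁ h₂ hcop (v := ![1, 0]) (fun h => by simpa using congrFun h 0)
      ((coeff_dehom h₁).symm.trans e₁) ((coeff_dehom h₂).symm.trans e₂)
  set A : Projectivization ℂ (Fin 2 → ℂ) → Polynomial ℂ :=
    fun t => t.rep 0 • f₁ + t.rep 1 • f₂ with hA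
  have hAF : ∀ t : Projectivization ℂ (Fin 2 → ℂ),
      dehom (t.rep 0 • C₁ + t.rep 1 • C₂) = A t := fun t => by simp [hA, hf₁, hf₂]
  have hA0 : ∀ t, A t ≠ 0 := fun t => pencil_ne_zero hn hz hi t.rep_nonzero
  have hhom : ∀ t : Projectivization ℂ (Fin 2 → ℂ),
      (t.rep 0 • C₁ + t.rep 1 • C₂).IsHomogeneous n := fun t => by
    simp only [MvPolynomial.smul_eq_C_mul]
    exact (h₁.C_mul _).add (h₂.C_mul _)
  have hAd : ∀ t, (A t).natDegree ≤ n := fun t => hAF t ▸ natDegree_dehom_le (hhom t)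
  -- the member of the pencil through the affine point `p`
  have hφne : ∀ p, ![f₂.eval p, -f₁.eval p] ≠ 0 := fun p h => hz p
    ⟨by simpa using congrFun h 1, by simpa using congrFun h 0⟩
  set φ : ℂ → Projectivization ℂ (Fin 2 → ℂ) := fun p => Projectivization.mk ℂ _ (hφne p) with hφ
  have hφiff : ∀ t p, (A t).eval p = 0 ↔ φ p = t := fun t p => by
    rw [eq_comm (a := φ p), hφ, ← rep_orthogonal_iff]; simp [hA]
  -- the member of the pencil through the point at infinity
  have hine : ![f₂.coeff n, -f₁.coeff n] ≠ 0 := fun h => hi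
    ⟨by simpa using congrFun h 1, by simpa using congrFun h 0⟩
  set τ : Projectivization ℂ (Fin 2 → ℂ) := Projectivization.mk ℂ _ hine with hτ
  have hτiff : ∀ t, (A t).coeff n = 0 ↔ t = τ := fun t => by
    rw [hτ, ← rep_orthogonal_iff]; simp [hA]
  have hcount : ∀ t, pencilZeroCount C₁ C₂ t =
      (A t).roots.toFinset.card + if t = τ then 1 else 0 := fun t => by
    rw [pencilZeroCount, card_zeroSet (hhom t) (by rw [hAF]; exact hA0 t), hAF]
    simp only [hτiff]
  have hτlt : (A τ).natDegree < n := by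
    refine lt_of_le_of_ne (hAd τ) fun h => hA0 τ ?_
    rw [← Polynomial.leadingCoeff_eq_zero, Polynomial.leadingCoeff, h]
    exact (hτiff τ).2 rfl
  have hdeg : ∀ t, t ≠ τ → (A t).natDegree = n := fun t ht =>
    le_antisymm (hAd t) (Polynomial.le_natDegree_of_ne_zero fun h => ht ((hτiff t).1 h))
  set W := Polynomial.wronskian f₁ f₂ with hW
  obtain ⟨hW0, hWd⟩ : W ≠ 0 ∧ W.natDegree + 1 = n + (A τ).natDegree :=
    natDegree_wronskian_pencil hd₁ hd₂ hi τ.rep_nonzero (hA0 τ) hτlt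
  -- the defect at `t`: Wronskian zeros on the fibre, plus the excess multiplicity at infinity
  have hkey : ∀ t, pencilZeroCount C₁ C₂ t + ((∑ p ∈ W.roots.toFinset with φ p = t,
      W.rootMultiplicity p) + if t = τ then n - 1 - (A τ).natDegree else 0) = n := fun t => by
    have hsum : ∑ p ∈ (A t).roots.toFinset, W.rootMultiplicity p =
        ∑ p ∈ W.roots.toFinset with φ p = t, W.rootMultiplicity p := by
      symm
      refine Finset.sum_subset (fun p hp => ?_) fun p hp hp' => ?_
      · rw [Multiset.mem_toFinset, Polynomial.mem_roots (hA0 t)]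
        exact (hφiff t p).2 (Finset.mem_filter.1 hp).2
      · rw [Multiset.mem_toFinset, Polynomial.mem_roots (hA0 t)] at hp
        refine Polynomial.rootMultiplicity_eq_zero fun hr => hp' (Finset.mem_filter.2 ⟨?_, ?_⟩)
        · rwa [Multiset.mem_toFinset, Polynomial.mem_roots hW0]
        · exact (hφiff t p).1 hp
    have h := natDegree_eq_card_roots_add hz t.rep_nonzero (hA0 t)
    change (A t).natDegree = (A t).roots.toFinset.card +
      ∑ p ∈ (A t).roots.toFinset, W.rootMultiplicity p at h
    rw [hcount, ← hsum]
    by_cases ht : t = τ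
    · subst ht
      simp only [if_true]
      omega
    · have := hdeg t ht
      simp only [if_neg ht]
      omega
  have hdef : ∀ t, n - pencilZeroCount C₁ C₂ t = (∑ p ∈ W.roots.toFinset with φ p = t,
      W.rootMultiplicity p) + if t = τ then n - 1 - (A τ).natDegree else 0 := fun t => by
    have := hkey t
    omega
  set S : Finset (Projectivization ℂ (Fin 2 → ℂ)) := insert τ (W.roots.toFinset.image φ) with hS
  have hsupp : ∀ t, t ∉ S → n - pencilZeroCount C₁ C₂ t = 0 := fun t ht => by
    simp only [hS, Finset.mem_insert, Finset.mem_image, not_or, not_exists, not_and] at ht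
    rw [hdef, if_neg ht.1, Finset.filter_false_of_mem ht.2, Finset.sum_empty]
  refine ⟨fun t h => hA0 t (by rw [← hAF, h, map_zero]), fun t => ⟨?_, by have := hkey t; omega⟩,
    ?_, ?_⟩
  · rw [zeroSet_eq (hhom t) (by rw [hAF]; exact hA0 t)]
    exact Finset.finite_toSet _
  · refine S.finite_toSet.subset fun t ht => ?_
    by_contra hS'
    have h1 := hsupp t hS'
    have h2 := hkey t
    exact ht (by omega)
  · rw [finsum_eq_sum_of_support_subset (s := S) _ fun t ht => by
      by_contra h; exact ht (hsupp t h)]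
    simp_rw [hdef]
    rw [Finset.sum_add_distrib, Finset.sum_fiberwise_of_maps_to fun p hp =>
      Finset.mem_insert_of_mem (Finset.mem_image_of_mem φ hp),
      sum_rootMultiplicity (Finset.Subset.refl _), Finset.sum_ite_eq' S τ,
      if_pos (Finset.mem_insert_self _ _)]
    omega
end
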